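/- arXiv:0710.1412 — 12 statements merged into one kernel-verified Lean document; each statement's English description precedes it below -/
import Mathlib

section
/- Let G be a group. If the commutator length cl_G is unbounded on the commutator subgroup [G,G], then G itself is unbounded, i.e., G admits an unbounded conjugation-invariant norm. -/
open scoped commutatorElement

/-- A conjugation-invariant norm on a group `G`. -/
def IsConjInvNorm {G : Type*} [Group G] (ν : G → ℝ) : Prop :=
  ν 1 = 0 ∧ (∀ f : G, 0 ≤ ν f) ∧ (∀ f : G, ν f⁻¹ = ν f) ∧
    (∀ f g : G, ν (f * g) ≤ ν f + ν g) ∧ (∀ f g : G, ν (g * f * g⁻¹) = ν f) ∧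
    (∀ f : G, f ≠ 1 → 0 < ν f)

/-- `x` is a product of `n` commutators of elements of `G`. -/
def IsProdOfNCommutators {G : Type*} [Group G] (x : G) (n : ℕ) : Prop :=
  ∃ f g : Fin n → G, x = (List.ofFn fun i => ⁅f i, g i⁆).prod


/-- unbounded quasi-norms suffice -/
theorem aux_quasi {G : Type*} [Group G] (φ : G → ℝ) (K : ℝ) (h0 : ∀ f, 0 ≤ φ f)
    (hm : ∀ f g, φ (f * g) ≤ φ f + φ g + K) (hi : ∀ f, φ f⁻¹ ≤ φ f + K)
    (hc : ∀ f g, φ (g * f * g⁻¹) ≤ φ f + K) (hu : ∀ C : ℝ, ∃ g, C < φ g) (hK : 0 < K) :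
    ∃ ν : G → ℝ, IsConjInvNorm ν ∧ ∀ C : ℝ, ∃ g : G, C < ν g := by
  classical
  let F : G → G × Bool → ℝ := fun f p => φ (p.1 * (if p.2 then f else f⁻¹) * p.1⁻¹)
  have hF : ∀ f, BddAbove (Set.range (F f)) := by
    intro f
    refine ⟨φ f + 2 * K, ?_⟩
    rintro _ ⟨⟨g, b⟩, rfl⟩
    cases b
    · have h1 := hc f⁻¹ g
      have h2 := hi f
      simp only [F]
      simp only [Bool.false_eq_true, if_false]
      linarith
    · have h1 := hc f g
      simp only [F, if_true]
      linarith
  let ψ : G → ℝ := fun f => ⨆ p, F f p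
  have hT : ∀ f g, φ (g * f * g⁻¹) ≤ ψ f := fun f g => by
    have := le_ciSup (hF f) (g, true)
    exact (le_of_eq (by simp [F])).trans this
  have hFa : ∀ f g, φ (g * f⁻¹ * g⁻¹) ≤ ψ f := fun f g => by
    have := le_ciSup (hF f) (g, false)
    exact (le_of_eq (by simp [F])).trans this
  have hle : ∀ f c, (∀ g, φ (g * f * g⁻¹) ≤ c) → (∀ g, φ (g * f⁻¹ * g⁻¹) ≤ c) → ψ f ≤ c := by
    intro f c h1 h2
    refine ciSup_le ?_
    rintro ⟨g, b⟩
    cases b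
    · simpa [F] using h2 g
    · simpa [F] using h1 g
  have ψφ : ∀ f, φ f ≤ ψ f := fun f => by simpa using hT f 1
  have ψ0 : ∀ f, 0 ≤ ψ f := fun f => (h0 f).trans (ψφ f)
  have ψi' : ∀ f, ψ f⁻¹ ≤ ψ f := fun f => hle _ _ (hFa f) (by simpa using hT f)
  have ψi : ∀ f, ψ f⁻¹ = ψ f := fun f => le_antisymm (ψi' f) (by simpa using ψi' f⁻¹)
  have ψc' : ∀ f g, ψ (g * f * g⁻¹) ≤ ψ f := by
    intro f g
    refine hle _ _ (fun k => ?_) (fun k => ?_)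
    · have := hT f (k * g)
      simpa [mul_assoc] using this
    · have := hFa f (k * g)
      simpa [mul_assoc] using this
  have ψc : ∀ f g, ψ (g * f * g⁻¹) = ψ f := fun f g => le_antisymm (ψc' f g) (by
    simpa [mul_assoc] using ψc' (g * f * g⁻¹) g⁻¹)
  have ψm : ∀ f g, ψ (f * g) ≤ ψ f + ψ g + K := by
    intro f g
    refine hle _ _ (fun k => ?_) (fun k => ?_)
    · have h1 := hm (k * f * k⁻¹) (k * g * k⁻¹)
      have h2 := hT f k
      have h3 := hT g k
      have : k * (f * g) * k⁻¹ = (k * f * k⁻¹) * (k * g * k⁻¹) := by group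
      rw [this]; linarith
    · have h1 := hm (k * g⁻¹ * k⁻¹) (k * f⁻¹ * k⁻¹)
      have h2 := hFa f k
      have h3 := hFa g k
      have : k * (f * g)⁻¹ * k⁻¹ = (k * g⁻¹ * k⁻¹) * (k * f⁻¹ * k⁻¹) := by group
      rw [this]; linarith
  refine ⟨fun f => if f = 1 then 0 else ψ f + K, ⟨by simp, ?_, ?_, ?_, ?_, ?_⟩, ?_⟩
  · intro f
    have := ψ0 f
    dsimp only
    split_ifs <;> linarith
  · intro f
    simp [ψi]
  · intro f g
    have h1 := ψ0 f
    have h2 := ψ0 g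
    have h3 := ψm f g
    by_cases hf : f = 1
    · simp [hf]
    by_cases hg : g = 1
    · simp [hg]
    simp only [hf, hg, if_false]
    split_ifs <;> linarith
  · intro f g
    have : g * f * g⁻¹ = 1 ↔ f = 1 := by simp
    simp only [this, ψc]
  · intro f hf
    have := ψ0 f
    simp only [hf, if_false]
    linarith
  · intro C
    obtain ⟨g, hg⟩ := hu (max C (φ 1))
    have h1 := (le_max_left _ _).trans_lt hg
    have h2 := (le_max_right _ _).trans_lt hg
    refine ⟨g, ?_⟩
    have : g ≠ 1 := by rintro rfl; exact lt_irrefl _ h2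
    have h3 := ψφ g
    simp only [this, if_false]
    linarith

/-- unbounded pseudo-norm on an abelian group -/
def AuxUnb (A : Type*) [AddCommGroup A] : Prop :=
  ∃ φ : A → ℝ, (∀ a, 0 ≤ φ a) ∧ (∀ a b, φ (a + b) ≤ φ a + φ b) ∧ (∀ a, φ (-a) = φ a) ∧
    ∀ C : ℝ, ∃ a, C < φ a

theorem AuxUnb.comap {A B : Type*} [AddCommGroup A] [AddCommGroup B] (f : A →+ B)
    (hf : Function.Surjective f) (h : AuxUnb B) : AuxUnb A := by
  obtain ⟨φ, h0, h1, h2, h3⟩ := h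
  refine ⟨fun a => φ (f a), fun a => h0 _, fun a b => by simpa using h1 _ _,
    fun a => by simpa using h2 _, fun C => ?_⟩
  obtain ⟨b, hb⟩ := h3 C
  obtain ⟨a, rfl⟩ := hf b
  exact ⟨a, hb⟩

theorem aux_vec' (F : Type*) [Field F] [Finite F] (V : Type*) [AddCommGroup V] [Module F V]
    [Infinite V] : AuxUnb V := by
  classical
  let b := Module.Basis.ofVectorSpace F V
  have hinf : Infinite (Module.Basis.ofVectorSpaceIndex F V) := by
    by_contra hfin
    rw [not_infinite_iff_finite] at hfin
    have : Finite V := Finite.of_equiv _ b.equivFun.symm.toEquiv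
    exact not_finite V
  refine ⟨fun x => ((b.repr x).support.card : ℝ), fun a => by positivity, fun x y => ?_,
    fun x => ?_, fun C => ?_⟩
  · dsimp only
    rw [map_add]
    exact_mod_cast (Finset.card_le_card Finsupp.support_add).trans (Finset.card_union_le _ _)
  · simp only [map_neg, Finsupp.support_neg]
  · obtain ⟨n, hn⟩ := exists_nat_gt C
    obtain ⟨s, hs⟩ := Infinite.exists_subset_card_eq
      (Module.Basis.ofVectorSpaceIndex F V) n
    refine ⟨b.repr.symm (Finsupp.indicator s fun _ _ => 1), ?_⟩
    have : (Finsupp.indicator s fun _ _ => (1 : F)).support = s := by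
      ext i
      simp [Finsupp.indicator_apply]
    simp only [LinearEquiv.apply_symm_apply, this, hs]
    exact hn

theorem aux_vec (p : ℕ) [Fact p.Prime] (V : Type*) [AddCommGroup V] [Infinite V]
    (h : ∀ x : V, p • x = 0) : AuxUnb V := by
  let _ : Module (ZMod p) V := AddCommGroup.zmodModule h
  exact aux_vec' (ZMod p) V

theorem aux_exp : ∀ (n : ℕ), 0 < n → ∀ (A : Type*) [AddCommGroup A] [Infinite A],
    (∀ x : A, n • x = 0) → AuxUnb A := by
  intro n
  induction n using Nat.strong_induction_on with
  | _ n ih =>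
    intro hn A _ _ hA
    by_cases h1 : n = 1
    · subst h1
      have : Subsingleton A := ⟨fun x y => by
        have := hA x; have := hA y; simp_all⟩
      exact absurd (inferInstance : Infinite A) (by simpa using Finite.of_subsingleton)
    obtain ⟨p, hp, m, rfl⟩ := Nat.exists_prime_and_dvd h1
    have := Fact.mk hp
    let f : A →+ A := nsmulAddMonoidHom p
    by_cases hq : Infinite (A ⧸ f.range)
    · refine AuxUnb.comap (QuotientAddGroup.mk' f.range) (QuotientAddGroup.mk'_surjective _) ?_
      refine aux_vec p _ ?_
      intro x
      obtain ⟨a, rfl⟩ := QuotientAddGroup.mk'_surjective _ x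
      rw [← map_nsmul]
      exact (QuotientAddGroup.eq_zero_iff _).2 ⟨a, rfl⟩
    · rw [not_infinite_iff_finite] at hq
      have : Infinite f.range := by
        by_contra hfin
        rw [not_infinite_iff_finite] at hfin
        have : Finite A := Finite.of_equiv _
          (AddSubgroup.addGroupEquivQuotientProdAddSubgroup (s := f.range)).symm
        exact not_finite A
      refine AuxUnb.comap f.rangeRestrict f.rangeRestrict_surjective ?_
      have hm : 0 < m := Nat.pos_of_mul_pos_left hn
      refine ih m ?_ hm _ ?_
      · nlinarith [hp.two_le]
      · rintro ⟨_, a, rfl⟩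
        ext
        have := hA a
        rw [mul_comm, mul_smul] at this
        simpa [f] using this

theorem aux_tors (A : Type*) [AddCommGroup A] [Infinite A]
    (h : ∀ x : A, ∃ n, 0 < n ∧ n • x = 0) : AuxUnb A := by
  by_cases hb : ∃ n, 0 < n ∧ ∀ x : A, n • x = 0
  · obtain ⟨n, hn, hx⟩ := hb
    exact aux_exp n hn A hx
  let c : A → ℕ := fun a => sInf {n | n.factorial • a = 0}
  have hc : ∀ a, (c a).factorial • a = 0 := by
    intro a
    have : {n : ℕ | n.factorial • a = 0}.Nonempty := by
      obtain ⟨n, hn, ha⟩ := h a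
      obtain ⟨k, hk⟩ := Nat.dvd_factorial hn le_rfl
      exact ⟨n, by simp [hk, mul_comm n k, mul_smul, ha]⟩
    exact Nat.sInf_mem this
  have hc' : ∀ a n, c a ≤ n → n.factorial • a = 0 := by
    intro a n hn
    obtain ⟨k, hk⟩ := Nat.factorial_dvd_factorial hn
    rw [hk, mul_comm, mul_smul, hc, smul_zero]
  have hle : ∀ a n, n.factorial • a = 0 → c a ≤ n := fun a n hn => Nat.sInf_le hn
  refine ⟨fun a => (c a : ℝ), fun a => by positivity, fun a b => ?_, fun a => ?_, fun C => ?_⟩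
  · have : c (a + b) ≤ c a + c b := hle _ _ (by
      rw [smul_add, hc' a _ (by omega), hc' b _ (by omega), add_zero])
    show (c (a + b) : ℝ) ≤ c a + c b
    exact_mod_cast this
  · simp [c]
  · by_contra! hC
    obtain ⟨n, hn⟩ := exists_nat_gt C
    refine hb ⟨n.factorial, n.factorial_pos, fun x => hc' x n ?_⟩
    exact_mod_cast (hC x).trans hn.le

theorem aux_inf (A : Type*) [AddCommGroup A] [Infinite A] : AuxUnb A := by
  by_cases h : ∀ x : A, ∃ n, 0 < n ∧ n • x = 0
  · exact aux_tors A h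
  push Not at h
  obtain ⟨x, hx⟩ := h
  have hinj : Function.Injective (LinearMap.toSpanSingleton ℤ A x) := by
    rw [← LinearMap.ker_eq_bot, LinearMap.ker_eq_bot']
    intro m hm
    by_contra hm0
    refine hx m.natAbs (Int.natAbs_pos.2 hm0) ?_
    simpa using hm
  obtain ⟨f, hf⟩ := (Module.Baer.of_divisible ℚ).extension_property
    (LinearMap.toSpanSingleton ℤ A x) hinj (LinearMap.toSpanSingleton ℤ ℚ 1)
  have hfx : f x = 1 := by simpa using LinearMap.congr_fun hf 1
  refine ⟨fun a => |(f a : ℝ)|, fun a => abs_nonneg _, fun a b => ?_, fun a => ?_, fun C => ?_⟩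
  · simp only [map_add, Rat.cast_add]
    exact abs_add_le _ _
  · simp
  · obtain ⟨n, hn⟩ := exists_nat_gt C
    exact ⟨n • x, by simpa [hfx] using hn⟩

theorem aux_list {G : Type*} [Group G] (x : G) (n : ℕ) : IsProdOfNCommutators x n ↔
    ∃ l : List G, l.length = n ∧ (∀ c ∈ l, c ∈ commutatorSet G) ∧ l.prod = x := by
  constructor
  · rintro ⟨f, g, rfl⟩
    refine ⟨_, by simp, ?_, rfl⟩
    intro c hc
    rw [List.mem_ofFn] at hc
    obtain ⟨i, rfl⟩ := hc
    exact ⟨_, _, rfl⟩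
  · rintro ⟨l, rfl, hl, rfl⟩
    have : ∀ i : Fin l.length, ∃ a b : G, ⁅a, b⁆ = l.get i := fun i => hl _ (List.get_mem _ _)
    choose f g hfg using this
    refine ⟨f, g, ?_⟩
    simp only [hfg]
    rw [List.ofFn_get]

theorem aux_mul {G : Type*} [Group G] {x y : G} {m n : ℕ} (hx : IsProdOfNCommutators x m)
    (hy : IsProdOfNCommutators y n) : IsProdOfNCommutators (x * y) (m + n) := by
  rw [aux_list] at *
  obtain ⟨l, rfl, hl, rfl⟩ := hx
  obtain ⟨k, rfl, hk, rfl⟩ := hy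
  refine ⟨l ++ k, by simp, ?_, by simp⟩
  intro c hc
  rcases List.mem_append.1 hc with h | h
  exacts [hl c h, hk c h]

theorem aux_one {G : Type*} [Group G] (n : ℕ) : IsProdOfNCommutators (1 : G) n :=
  ⟨fun _ => 1, fun _ => 1, by simp⟩

theorem aux_mono {G : Type*} [Group G] {x : G} {m n : ℕ} (hx : IsProdOfNCommutators x m)
    (h : m ≤ n) : IsProdOfNCommutators x n := by
  have := aux_mul hx (aux_one (n - m))
  rwa [mul_one, Nat.add_sub_cancel' h] at this

theorem aux_comm {G : Type*} [Group G] (a b : G) : IsProdOfNCommutators ⁅a, b⁆ 1 :=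
  ⟨fun _ => a, fun _ => b, by simp⟩

theorem aux_conj {G : Type*} [Group G] {x : G} {n : ℕ} (hx : IsProdOfNCommutators x n) (g : G) :
    IsProdOfNCommutators (g * x * g⁻¹) n := by
  induction n generalizing x with
  | zero =>
    obtain ⟨f, k, rfl⟩ := hx
    simpa using aux_one 0
  | succ n ih =>
    obtain ⟨f, k, rfl⟩ := hx
    have h1 := ih (x := (List.ofFn fun i : Fin n => ⁅f i.succ, k i.succ⁆).prod) ⟨_, _, rfl⟩
    have h2 := aux_mul (aux_comm (g * f 0 * g⁻¹) (g * k 0 * g⁻¹)) h1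
    replace h2 := aux_mono h2 (Nat.add_comm 1 n).le
    convert h2 using 1
    rw [List.ofFn_succ, List.prod_cons]
    simp only [commutatorElement_def]
    group

theorem aux_inv {G : Type*} [Group G] {x : G} {n : ℕ} (hx : IsProdOfNCommutators x n) :
    IsProdOfNCommutators x⁻¹ n := by
  induction n generalizing x with
  | zero =>
    obtain ⟨f, k, rfl⟩ := hx
    simpa using aux_one 0
  | succ n ih =>
    obtain ⟨f, k, rfl⟩ := hx
    have h1 := ih (x := (List.ofFn fun i : Fin n => ⁅f i.succ, k i.succ⁆).prod) ⟨_, _, rfl⟩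
    have h2 := aux_mul h1 (aux_comm (k 0) (f 0))
    convert h2 using 1
    rw [List.ofFn_succ, List.prod_cons, mul_inv_rev, commutatorElement_inv]

theorem aux_ex {G : Type*} [Group G] {x : G} (hx : x ∈ commutator G) :
    ∃ n, IsProdOfNCommutators x n := by
  rw [commutator_eq_closure] at hx
  induction hx using Subgroup.closure_induction with
  | mem x hx =>
    obtain ⟨a, b, rfl⟩ := hx
    exact ⟨1, aux_comm a b⟩
  | one => exact ⟨0, aux_one 0⟩
  | mul x y _ _ hx hy =>
    obtain ⟨m, hm⟩ := hx
    obtain ⟨n, hn⟩ := hy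
    exact ⟨_, aux_mul hm hn⟩
  | inv x _ hx =>
    obtain ⟨m, hm⟩ := hx
    exact ⟨m, aux_inv hm⟩

theorem aux_mem {G : Type*} [Group G] {x : G} (hx : Abelianization.of x = 1) :
    ∃ n, IsProdOfNCommutators x n := by
  apply aux_ex
  rw [← Abelianization.ker_of]
  exact hx

theorem aux_fin {G : Type*} [Group G] [Finite (Abelianization G)]
    (h : ∀ N : ℕ, ∃ x : G, x ∈ commutator G ∧ ¬ IsProdOfNCommutators x N) :
    ∃ ν : G → ℝ, IsConjInvNorm ν ∧ ∀ C : ℝ, ∃ g : G, C < ν g := by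
  have hs : Function.Surjective (Abelianization.of : G → Abelianization G) :=
    QuotientGroup.mk_surjective
  obtain ⟨t, ht⟩ := hs.hasRightInverse
  let cl : G → ℕ := fun x => sInf {n | IsProdOfNCommutators x n}
  have hcl : ∀ x, Abelianization.of x = 1 → IsProdOfNCommutators x (cl x) :=
    fun x hx => Nat.sInf_mem (aux_mem hx)
  have hle : ∀ x n, IsProdOfNCommutators x n → cl x ≤ n := fun x n hn => Nat.sInf_le hn
  obtain ⟨K1, hK1⟩ := (Set.finite_range fun p : Abelianization G × Abelianization G =>
    cl ((t (p.1 * p.2))⁻¹ * t p.1 * t p.2)).bddAbove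
  obtain ⟨K2, hK2⟩ := (Set.finite_range fun p : Abelianization G =>
    cl ((t p⁻¹)⁻¹ * (t p)⁻¹)).bddAbove
  have hK1' : ∀ a b, IsProdOfNCommutators ((t (a * b))⁻¹ * t a * t b) K1 := fun a b =>
    aux_mono (hcl _ (by simp [ht _])) (hK1 ⟨(a, b), rfl⟩)
  have hK2' : ∀ a, IsProdOfNCommutators ((t a⁻¹)⁻¹ * (t a)⁻¹) K2 := fun a =>
    aux_mono (hcl _ (by simp [ht _])) (hK2 ⟨a, rfl⟩)
  let φ : G → ℕ := fun g => cl ((t (Abelianization.of g))⁻¹ * g)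
  have hφ : ∀ g, IsProdOfNCommutators ((t (Abelianization.of g))⁻¹ * g) (φ g) := fun g =>
    hcl _ (by simp [ht _])
  refine aux_quasi (fun g => (φ g : ℝ)) (K1 + K2 + 1) (fun g => by positivity) ?_ ?_ ?_ ?_
    (by positivity)
  · intro f g
    have h1 := aux_mul (aux_mul (hK1' (Abelianization.of f) (Abelianization.of g))
      (aux_conj (hφ f) (t (Abelianization.of g))⁻¹)) (hφ g)
    have h2 : φ (f * g) ≤ K1 + φ f + φ g := hle _ _ (by
      convert h1 using 1
      rw [map_mul]
      group)
    have h3 : (φ (f * g) : ℝ) ≤ K1 + φ f + φ g := by exact_mod_cast h2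
    have h4 : (0 : ℝ) ≤ K2 := by positivity
    linarith
  · intro f
    have h1 := aux_mul (hK2' (Abelianization.of f))
      (aux_conj (aux_inv (hφ f)) (t (Abelianization.of f)))
    have h2 : φ f⁻¹ ≤ K2 + φ f := hle _ _ (by
      convert h1 using 1
      rw [map_inv]
      group)
    have h3 : (φ f⁻¹ : ℝ) ≤ K2 + φ f := by exact_mod_cast h2
    have h4 : (0 : ℝ) ≤ K1 := by positivity
    linarith
  · intro f g
    have h1 := aux_mul (aux_conj (aux_comm g f) (t (Abelianization.of f))⁻¹) (hφ f)
    have h2 : φ (g * f * g⁻¹) ≤ 1 + φ f := hle _ _ (by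
      convert h1 using 1
      have : Abelianization.of (g * f * g⁻¹) = Abelianization.of f := by
        rw [map_mul, map_mul, map_inv, mul_comm, inv_mul_cancel_left]
      rw [this, commutatorElement_def]
      group)
    have h3 : (φ (g * f * g⁻¹) : ℝ) ≤ 1 + φ f := by exact_mod_cast h2
    have h4 : (0 : ℝ) ≤ K1 := by positivity
    have h5 : (0 : ℝ) ≤ K2 := by positivity
    linarith
  · intro C
    by_contra! hC
    obtain ⟨n, hn⟩ := exists_nat_gt C
    obtain ⟨k, hk⟩ := aux_mem (ht 1)
    obtain ⟨x, hx, hxn⟩ := h (k + n)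
    apply hxn
    have hx1 : Abelianization.of x = 1 := by
      rw [← Abelianization.ker_of] at hx
      exact hx
    have hxm : φ x ≤ n := by exact_mod_cast (hC x).trans hn.le
    have := aux_mul hk (aux_mono (hφ x) hxm)
    rw [hx1, mul_inv_cancel_left] at this
    exact this

/-- If the commutator length is unbounded on the commutator subgroup `[G,G]`,
then `G` admits an unbounded conjugation-invariant norm. -/
theorem unbounded_of_unbounded_commutator_length {G : Type*} [Group G]
    (h : ∀ N : ℕ, ∃ x : G, x ∈ commutator G ∧ ¬ IsProdOfNCommutators x N) :
    ∃ ν : G → ℝ, IsConjInvNorm ν ∧ ∀ C : ℝ, ∃ g : G, C < ν g := by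
  by_cases hA : Finite (Abelianization G)
  · exact aux_fin h
  rw [not_finite_iff_infinite] at hA
  obtain ⟨φ, h0, h1, h2, h3⟩ := aux_inf (Additive (Abelianization G))
  refine aux_quasi (fun g => φ (Additive.ofMul (Abelianization.of g))) 1 (fun _ => h0 _)
    (fun f g => ?_) (fun f => ?_) (fun f g => ?_) (fun C => ?_) one_pos
  · have := h1 (Additive.ofMul (Abelianization.of f)) (Additive.ofMul (Abelianization.of g))
    rw [map_mul, ofMul_mul]
    linarith
  · rw [map_inv, ofMul_inv, h2]
    linarith
  · have : Abelianization.of (g * f * g⁻¹) = Abelianization.of f := by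
      rw [map_mul, map_mul, map_inv, mul_comm, inv_mul_cancel_left]
    rw [this]
    linarith
  · obtain ⟨a, ha⟩ := h3 C
    obtain ⟨g, hg⟩ := QuotientGroup.mk_surjective (Additive.toMul a)
    refine ⟨g, ?_⟩
    have : Additive.ofMul (Abelianization.of g) = a := hg
    rw [this]
    exact ha
end

section
/- Let G be a group equipped with a conjugation-invariant norm ν, let H ≤ G be a subgroup, and let φ ∈ G be such that the subgroups H and φHφ⁻¹ commute elementwise. Then for all f,g ∈ H one has [f,g] = [f·φf⁻¹φ⁻¹, g] and consequently ν([f,g]) ≤ 4ν(φ). -/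
open scoped commutatorElement

/-- If `H` and `φHφ⁻¹` commute elementwise, then for `f, g ∈ H` one has
`[f,g] = [f·φf⁻¹φ⁻¹, g]` and hence `ν([f,g]) ≤ 4ν(φ)`. -/
theorem norm_commutator_le_of_displaceable {G : Type*} [Group G]
    (ν : G → ℝ) (hν : IsConjInvNorm ν) (H : Subgroup G) (φ : G)
    (hd : ∀ a ∈ H, ∀ b ∈ H, Commute a (φ * b * φ⁻¹)) :
    ∀ f ∈ H, ∀ g ∈ H,
      ⁅f, g⁆ = ⁅f * (φ * f⁻¹ * φ⁻¹), g⁆ ∧ ν ⁅f, g⁆ ≤ 4 * ν φ := by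
  intro f hf g hg
  obtain ⟨-, -, hinv, hmul, hconj, -⟩ := hν
  have hc : g * (φ * f⁻¹ * φ⁻¹) = (φ * f⁻¹ * φ⁻¹) * g := hd g hg f⁻¹ (H.inv_mem hf)
  have key : ⁅f, g⁆ = ⁅f * (φ * f⁻¹ * φ⁻¹), g⁆ := by
    generalize φ * f⁻¹ * φ⁻¹ = c at hc
    rw [commutatorElement_def, commutatorElement_def]
    have h : f * c * g * (f * c)⁻¹ * g⁻¹ = f * (c * g) * c⁻¹ * f⁻¹ * g⁻¹ := by group
    rw [h, ← hc]
    group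
  refine ⟨key, ?_⟩
  have hx : ν (f * (φ * f⁻¹ * φ⁻¹)) ≤ 2 * ν φ := by
    have h : f * (φ * f⁻¹ * φ⁻¹) = (f * φ * f⁻¹) * φ⁻¹ := by group
    have h1 := hmul (f * φ * f⁻¹) φ⁻¹
    rw [hconj, hinv] at h1
    rw [h]
    linarith
  rw [key]
  generalize f * (φ * f⁻¹ * φ⁻¹) = x at hx
  have h : ⁅x, g⁆ = x * (g * x⁻¹ * g⁻¹) := by
    rw [commutatorElement_def]; group
  have h1 := hmul x (g * x⁻¹ * g⁻¹)
  rw [hconj, hinv] at h1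
  rw [h]
  linarith
end

section
/- Let G be a group equipped with a conjugation-invariant norm ν, let H ≤ G be a subgroup, let m ≥ 1, and let φ ∈ G be such that the subgroups φⁱHφ⁻ⁱ, i = 0,1,…,m, pairwise commute elementwise. Then every element x ∈ G that is a product of m commutators [f₁,g₁]⋯[f_m,g_m] with all f_i, g_i ∈ H satisfies ν(x) ≤ 14·ν(φ). -/
open scoped commutatorElement

/-- The product of `φⁱ h(i) φ⁻ⁱ` over `i < n`. -/
def dispProd {G : Type*} [Group G] (φ : G) (h : ℕ → G) : ℕ → G
  | 0 => 1
  | n + 1 => dispProd φ h n * (φ ^ n * h n * (φ ^ n)⁻¹)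

/-- The reversed partial products `y (n-1) * ... * y 0`. -/
def revProd {G : Type*} [Group G] (y : ℕ → G) : ℕ → G
  | 0 => 1
  | n + 1 => y n * revProd y n

theorem revProd_mem {G : Type*} [Group G] (H : Subgroup G) (y : ℕ → G) (hy : ∀ i, y i ∈ H)
    (n : ℕ) : revProd y n ∈ H := by
  induction n with
  | zero => exact H.one_mem
  | succ n ih => exact H.mul_mem (hy n) ih

theorem revProd_inv {G : Type*} [Group G] (y : ℕ → G) (n : ℕ) :
    revProd (fun i => (y i)⁻¹) n = ((List.ofFn fun i : Fin n => y i).prod)⁻¹ := by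
  induction n with
  | zero => simp [revProd]
  | succ n ih =>
    rw [List.ofFn_succ']
    simp [revProd, ih]

theorem dispProd_commute {G : Type*} [Group G] (H : Subgroup G) (m : ℕ) (φ : G)
    (hd : ∀ i j : ℕ, i ≤ m → j ≤ m → i ≠ j →
      ∀ a ∈ H, ∀ b ∈ H, Commute (φ ^ i * a * (φ ^ i)⁻¹) (φ ^ j * b * (φ ^ j)⁻¹))
    (h : ℕ → G) (hh : ∀ i, h i ∈ H) (k : ℕ) (hk : k ≤ m) (b : G) (hb : b ∈ H)
    (n : ℕ) (hn : n ≤ k) : Commute (dispProd φ h n) (φ ^ k * b * (φ ^ k)⁻¹) := by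
  induction n with
  | zero => exact Commute.one_left _
  | succ n ih =>
    exact (ih (by omega)).mul_left (hd n k (by omega) hk (by omega) _ (hh n) _ hb)

theorem dispProd_mul {G : Type*} [Group G] (H : Subgroup G) (m : ℕ) (φ : G)
    (hd : ∀ i j : ℕ, i ≤ m → j ≤ m → i ≠ j →
      ∀ a ∈ H, ∀ b ∈ H, Commute (φ ^ i * a * (φ ^ i)⁻¹) (φ ^ j * b * (φ ^ j)⁻¹))
    (a b : ℕ → G) (ha : ∀ i, a i ∈ H) (hb : ∀ i, b i ∈ H) (n : ℕ) (hn : n ≤ m) :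
    dispProd φ (fun i => a i * b i) n = dispProd φ a n * dispProd φ b n := by
  induction n with
  | zero => simp [dispProd]
  | succ n ih =>
    have hc := (dispProd_commute H m φ hd b hb n (by omega) (a n) (ha n) n le_rfl).eq
    simp only [dispProd]
    rw [ih (by omega)]
    calc _ = dispProd φ a n * (dispProd φ b n * (φ ^ n * a n * (φ ^ n)⁻¹))
          * (φ ^ n * b n * (φ ^ n)⁻¹) := by group
      _ = _ := by rw [hc]; group

theorem dispProd_one {G : Type*} [Group G] (φ : G) (n : ℕ) :
    dispProd φ (fun _ => 1) n = 1 := by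
  induction n with
  | zero => rfl
  | succ n ih => simp [dispProd, ih]

theorem dispProd_shift {G : Type*} [Group G] (H : Subgroup G) (m : ℕ) (φ : G)
    (hd : ∀ i j : ℕ, i ≤ m → j ≤ m → i ≠ j →
      ∀ a ∈ H, ∀ b ∈ H, Commute (φ ^ i * a * (φ ^ i)⁻¹) (φ ^ j * b * (φ ^ j)⁻¹))
    (y : ℕ → G) (hy : ∀ i, y i ∈ H) (n : ℕ) (hn : n ≤ m) :
    dispProd φ y n * (φ ^ n * (revProd y n)⁻¹ * (φ ^ n)⁻¹)
      = ⁅dispProd φ (fun i => revProd y (i + 1)) n, φ⁆ := by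
  induction n with
  | zero => simp [dispProd, revProd]
  | succ n ih =>
    have ih := ih (by omega)
    have hU := (dispProd_commute H m φ hd (fun i => revProd y (i + 1))
      (fun i => revProd_mem H y hy _) n (by omega) (revProd y (n + 1))
      (revProd_mem H y hy _) n le_rfl).eq
    have hT := (dispProd_commute H m φ hd y hy n (by omega) (revProd y (n + 1))
      (revProd_mem H y hy _) n le_rfl).eq
    rw [commutatorElement_def] at ih ⊢
    have e : dispProd φ (fun i => revProd y (i + 1)) (n + 1)
      = dispProd φ (fun i => revProd y (i + 1)) n *
        (φ ^ n * revProd y (n + 1) * (φ ^ n)⁻¹) := rfl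
    have e2 : dispProd φ y (n + 1) = dispProd φ y n * (φ ^ n * y n * (φ ^ n)⁻¹) := rfl
    have e3 : y n = revProd y (n + 1) * (revProd y n)⁻¹ := by simp [revProd]
    rw [e, e2, hU]
    generalize dispProd φ (fun i => revProd y (i + 1)) n = U at *
    generalize dispProd φ y n = T at *
    rw [e3]
    generalize revProd y (n + 1) = q' at *
    generalize revProd y n = q at *
    symm
    calc _ = (φ ^ n * q' * (φ ^ n)⁻¹) * (U * φ * U⁻¹ * φ⁻¹)
          * (φ * (φ ^ n * q' * (φ ^ n)⁻¹)⁻¹ * φ⁻¹) := by group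
      _ = ((φ ^ n * q' * (φ ^ n)⁻¹) * T) * (φ ^ n * q⁻¹ * (φ ^ n)⁻¹)
          * (φ * (φ ^ n * q' * (φ ^ n)⁻¹)⁻¹ * φ⁻¹) := by rw [← ih]; group
      _ = _ := by rw [← hT, pow_succ']; group

/-- If `φ` strongly `m`-displaces the subgroup `H` (the conjugates `φⁱHφ⁻ⁱ`,
`i = 0,…,m`, pairwise commute elementwise), then any product of `m` commutators
of elements of `H` satisfies `ν(x) ≤ 14 ν(φ)`. -/
theorem norm_le_of_m_displaceable {G : Type*} [Group G]
    (ν : G → ℝ) (hν : IsConjInvNorm ν) (H : Subgroup G) (m : ℕ) (hm : 1 ≤ m) (φ : G)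
    (hd : ∀ i j : ℕ, i ≤ m → j ≤ m → i ≠ j →
      ∀ a ∈ H, ∀ b ∈ H, Commute (φ ^ i * a * (φ ^ i)⁻¹) (φ ^ j * b * (φ ^ j)⁻¹))
    (x : G) (f g : Fin m → G) (hf : ∀ i, f i ∈ H) (hg : ∀ i, g i ∈ H)
    (hx : x = (List.ofFn fun i => ⁅f i, g i⁆).prod) :
    ν x ≤ 14 * ν φ := by
  obtain ⟨-, h0, hinv, hmul, hconj, -⟩ := hν
  have hcomm : ∀ a b : G, ν ⁅a, b⁆ ≤ 2 * ν b := by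
    intro a b
    rw [commutatorElement_def]
    have := hmul (a * b * a⁻¹) b⁻¹
    rw [hconj, hinv] at this
    linarith
  have hcomm' : ∀ a b : G, ν ⁅a, b⁆ ≤ 2 * ν a := by
    intro a b
    rw [← hinv, commutatorElement_inv]
    exact hcomm b a
  let F : ℕ → G := fun i => if h : i < m then f ⟨i, h⟩ else 1
  let K : ℕ → G := fun i => if h : i < m then g ⟨i, h⟩ else 1
  have hF : ∀ i, F i ∈ H := by
    intro i
    by_cases h : i < m
    · simp [F, h, hf]
    · simp [F, h, H.one_mem]
  have hK : ∀ i, K i ∈ H := by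
    intro i
    by_cases h : i < m
    · simp [K, h, hg]
    · simp [K, h, H.one_mem]
  have hxq : revProd (fun i => (⁅F i, K i⁆)⁻¹) m = x⁻¹ := by
    rw [revProd_inv, hx]
    simp [F, K]
  have hFi : ∀ i, (F i)⁻¹ ∈ H := fun i => H.inv_mem (hF i)
  have hKi : ∀ i, (K i)⁻¹ ∈ H := fun i => H.inv_mem (hK i)
  have hinvprod : ∀ a : ℕ → G, (∀ i, a i ∈ H) →
      dispProd φ (fun i => (a i)⁻¹) m = (dispProd φ a m)⁻¹ := by
    intro a ha
    have := dispProd_mul H m φ hd (fun i => (a i)⁻¹) a (fun i => H.inv_mem (ha i)) ha m le_rfl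
    simp only [inv_mul_cancel, dispProd_one] at this
    exact eq_inv_of_mul_eq_one_left this.symm
  have hcp : dispProd φ (fun i => (⁅F i, K i⁆)⁻¹) m = ⁅dispProd φ K m, dispProd φ F m⁆ := by
    simp only [commutatorElement_inv]
    simp only [commutatorElement_def]
    rw [dispProd_mul H m φ hd (fun i => K i * F i * (K i)⁻¹) (fun i => (F i)⁻¹)
        (fun i => H.mul_mem (H.mul_mem (hK i) (hF i)) (hKi i)) hFi m le_rfl,
      dispProd_mul H m φ hd (fun i => K i * F i) (fun i => (K i)⁻¹)
        (fun i => H.mul_mem (hK i) (hF i)) hKi m le_rfl,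
      dispProd_mul H m φ hd K F hK hF m le_rfl, hinvprod F hF, hinvprod K hK]
  have hy : ∀ i, (⁅F i, K i⁆)⁻¹ ∈ H := fun i => H.inv_mem
    (H.mul_mem (H.mul_mem (H.mul_mem (hF i) (hK i)) (hFi i)) (hKi i))
  have h1 := dispProd_shift H m φ hd _ hy m le_rfl
  rw [hxq, hcp, inv_inv] at h1
  have h2 := dispProd_shift H m φ hd K hK m le_rfl
  have h3 := (dispProd_commute H m φ hd F hF m le_rfl _
    (H.inv_mem (revProd_mem H K hK m)) m le_rfl).eq
  have h4 : ⁅dispProd φ K m, dispProd φ F m⁆ =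
      ⁅dispProd φ K m * (φ ^ m * (revProd K m)⁻¹ * (φ ^ m)⁻¹), dispProd φ F m⁆ := by
    generalize φ ^ m * (revProd K m)⁻¹ * (φ ^ m)⁻¹ = p at *
    generalize dispProd φ F m = B at *
    generalize dispProd φ K m = A at *
    simp only [commutatorElement_def]
    calc A * B * A⁻¹ * B⁻¹ = A * (B * p) * p⁻¹ * A⁻¹ * B⁻¹ := by group
      _ = _ := by rw [h3]; group
  have h5 : ν ⁅dispProd φ K m, dispProd φ F m⁆ ≤ 4 * ν φ := by
    rw [h4, h2]
    have a1 := hcomm' ⁅dispProd φ (fun i => revProd K (i + 1)) m, φ⁆ (dispProd φ F m)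
    have a2 := hcomm (dispProd φ (fun i => revProd K (i + 1)) m) φ
    linarith
  have h6 := eq_inv_mul_of_mul_eq h1
  have h7 := hconj x (φ ^ m)
  rw [h6] at h7
  have h8 := hmul (⁅dispProd φ K m, dispProd φ F m⁆)⁻¹
    ⁅dispProd φ (fun i => revProd (fun i => (⁅F i, K i⁆)⁻¹) (i + 1)) m, φ⁆
  rw [hinv] at h8
  have h9 := hcomm (dispProd φ (fun i => revProd (fun i => (⁅F i, K i⁆)⁻¹) (i + 1)) m) φ
  have := h0 φ
  linarith
end

section
/- Let G be a group, let H ≤ G be a subgroup, let m ≥ 1, and suppose there exists φ ∈ G such that the subgroups φⁱHφ⁻ⁱ, i = 0,1,…,m, pairwise commute elementwise. Then every element x ∈ G that is a product of m commutators [f₁,g₁]⋯[f_m,g_m] with all f_i, g_i ∈ H satisfies cl_G(x) ≤ 2, i.e., x is a product of at most two commutators of elements of G. -/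
open scoped commutatorElement

/-- The subgroup generated by the conjugates `φⁱHφ⁻ⁱ`, `i ≤ n`. -/
def dispS {G : Type*} [Group G] (H : Subgroup G) (φ : G) (n : ℕ) : Subgroup G :=
  Subgroup.closure {y | ∃ i ≤ n, ∃ a ∈ H, y = φ ^ i * a * (φ ^ i)⁻¹}

theorem le_dispS {G : Type*} [Group G] (H : Subgroup G) (φ : G) (n : ℕ) {a : G} (ha : a ∈ H) :
    a ∈ dispS H φ n :=
  Subgroup.subset_closure ⟨0, Nat.zero_le _, a, ha, by simp⟩

theorem dispS_conj {G : Type*} [Group G] (H : Subgroup G) (φ : G) (n : ℕ) {w : G}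
    (hw : w ∈ dispS H φ n) : φ * w * φ⁻¹ ∈ dispS H φ (n + 1) := by
  induction hw using Subgroup.closure_induction with
  | mem y hy =>
    obtain ⟨i, hi, a, ha, rfl⟩ := hy
    exact Subgroup.subset_closure ⟨i + 1, by omega, a, ha, by rw [pow_succ']; group⟩
  | one => simp
  | mul y z _ _ h1 h2 =>
    have := mul_mem h1 h2
    convert this using 1
    group
  | inv y _ h1 =>
    have := inv_mem h1
    convert this using 1
    group

theorem dispS_comm {G : Type*} [Group G] (H : Subgroup G) (m : ℕ) (φ : G)
    (hd : ∀ i j : ℕ, i ≤ m → j ≤ m → i ≠ j →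
      ∀ a ∈ H, ∀ b ∈ H, Commute (φ ^ i * a * (φ ^ i)⁻¹) (φ ^ j * b * (φ ^ j)⁻¹))
    (n : ℕ) (hn : n + 1 ≤ m) {h : G} (hh : h ∈ H) {w : G}
    (hw : w ∈ dispS H φ n) : Commute (φ * w * φ⁻¹) h := by
  induction hw using Subgroup.closure_induction with
  | mem y hy =>
    obtain ⟨i, hi, a, ha, rfl⟩ := hy
    have := hd (i + 1) 0 (by omega) (by omega) (by omega) a ha h hh
    rw [pow_succ'] at this
    simpa [mul_assoc] using this
  | one => simp
  | mul y z _ _ h1 h2 =>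
    have := h1.mul_left h2
    have e : φ * (y * z) * φ⁻¹ = φ * y * φ⁻¹ * (φ * z * φ⁻¹) := by group
    rwa [e]
  | inv y _ h1 =>
    have := h1.inv_left
    convert this using 1
    group

theorem comm_mul_comm {G : Type*} [Group G] {u v f g : G} (h1 : Commute u f) (h2 : Commute u g)
    (h3 : Commute v f) (h4 : Commute v g) : ⁅u, v⁆ * ⁅f, g⁆ = ⁅u * f, v * g⁆ := by
  have e1 : f * v = v * f := h3.eq.symm
  have e2 : Commute (f * g * f⁻¹) u⁻¹ :=
    ((h1.symm.mul_left h2.symm).mul_left h1.symm.inv_left).inv_right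
  have e3 : Commute (f * g * f⁻¹ * g⁻¹) v⁻¹ :=
    (((h3.symm.mul_left h4.symm).mul_left h3.symm.inv_left).mul_left h4.symm.inv_left).inv_right
  simp only [commutatorElement_def]
  calc u * v * u⁻¹ * v⁻¹ * (f * g * f⁻¹ * g⁻¹)
      = u * v * u⁻¹ * (f * g * f⁻¹ * g⁻¹ * v⁻¹) := by rw [e3.eq]; group
    _ = u * v * (u⁻¹ * (f * g * f⁻¹)) * g⁻¹ * v⁻¹ := by group
    _ = u * (v * f) * g * f⁻¹ * u⁻¹ * g⁻¹ * v⁻¹ := by rw [← e2.eq]; group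
    _ = u * f * (v * g) * (u * f)⁻¹ * (v * g)⁻¹ := by rw [← e1]; group

theorem disp_aux {G : Type*} [Group G] (H : Subgroup G) (m : ℕ) (φ : G)
    (hd : ∀ i j : ℕ, i ≤ m → j ≤ m → i ≠ j →
      ∀ a ∈ H, ∀ b ∈ H, Commute (φ ^ i * a * (φ ^ i)⁻¹) (φ ^ j * b * (φ ^ j)⁻¹))
    (n : ℕ) : n ≤ m → ∀ f g : Fin n → G, (∀ i, f i ∈ H) → (∀ i, g i ∈ H) →
    (List.ofFn fun i => ⁅f i, g i⁆).prod ∈ H ∧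
    ∃ z u v : G, u ∈ dispS H φ n ∧ v ∈ dispS H φ n ∧
      (List.ofFn fun i => ⁅f i, g i⁆).prod = ⁅z, φ⁆ * ⁅u, v⁆ := by
  induction n with
  | zero =>
    intro _ f g _ _
    exact ⟨by simp, 1, 1, 1, one_mem _, one_mem _, by simp⟩
  | succ n ih =>
    intro hn f g hf hg
    obtain ⟨hP, z, u, v, hu, hv, e⟩ := ih (by omega) (fun i => f i.castSucc)
      (fun i => g i.castSucc) (fun i => hf _) (fun i => hg _)
    rw [List.ofFn_succ', List.concat_eq_append, List.prod_append, List.prod_singleton]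
    generalize (List.ofFn fun i : Fin n => ⁅f i.castSucc, g i.castSucc⁆).prod = P at *
    have hF := hf (Fin.last n)
    have hG := hg (Fin.last n)
    generalize f (Fin.last n) = F at *
    generalize g (Fin.last n) = K at *
    have hcom : ∀ {S : Subgroup G} {a b : G}, a ∈ S → b ∈ S → ⁅a, b⁆ ∈ S := by
      intro S a b ha hb
      exact mul_mem (mul_mem (mul_mem ha hb) (inv_mem ha)) (inv_mem hb)
    refine ⟨mul_mem hP (hcom hF hG), ?_⟩
    have hq : ⁅z, φ⁆ ∈ dispS H φ n := by
      have : ⁅z, φ⁆ = P * ⁅u, v⁆⁻¹ := by rw [e]; group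
      rw [this]
      exact mul_mem (le_dispS H φ n hP) (inv_mem (hcom hu hv))
    have hu1 := mul_mem (mul_mem hq hu) (inv_mem hq)
    have hv1 := mul_mem (mul_mem hq hv) (inv_mem hq)
    refine ⟨P * (φ * z * φ⁻¹), (φ * (⁅z, φ⁆ * u * ⁅z, φ⁆⁻¹) * φ⁻¹) * F,
      (φ * (⁅z, φ⁆ * v * ⁅z, φ⁆⁻¹) * φ⁻¹) * K,
      mul_mem (dispS_conj H φ n hu1) (le_dispS H φ _ hF),
      mul_mem (dispS_conj H φ n hv1) (le_dispS H φ _ hG), ?_⟩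
    rw [← comm_mul_comm (dispS_comm H m φ hd n hn hF hu1) (dispS_comm H m φ hd n hn hG hu1)
      (dispS_comm H m φ hd n hn hF hv1) (dispS_comm H m φ hd n hn hG hv1), ← mul_assoc]
    congr 1
    rw [e]
    simp only [commutatorElement_def]
    group

/-- If some `φ ∈ G` strongly `m`-displaces the subgroup `H` (the conjugates
`φⁱHφ⁻ⁱ`, `i = 0,…,m`, pairwise commute elementwise), then any product of `m`
commutators of elements of `H` is a product of at most two commutators of
elements of `G`. -/
theorem cl_le_two_of_m_displaceable {G : Type*} [Group G]
    (H : Subgroup G) (m : ℕ) (hm : 1 ≤ m) (φ : G)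
    (hd : ∀ i j : ℕ, i ≤ m → j ≤ m → i ≠ j →
      ∀ a ∈ H, ∀ b ∈ H, Commute (φ ^ i * a * (φ ^ i)⁻¹) (φ ^ j * b * (φ ^ j)⁻¹))
    (x : G) (f g : Fin m → G) (hf : ∀ i, f i ∈ H) (hg : ∀ i, g i ∈ H)
    (hx : x = (List.ofFn fun i => ⁅f i, g i⁆).prod) :
    ∃ a b c d : G, x = ⁅a, b⁆ * ⁅c, d⁆ := by
  obtain ⟨_, z, u, v, _, _, e⟩ := disp_aux H m φ hd m le_rfl f g hf hg
  exact ⟨z, φ, u, v, hx.trans e⟩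
end

section
/- Let G be a group, let H ≤ G be a subgroup, let m ≥ 1, and let F ∈ G be such that the subgroups FⁱHF⁻ⁱ, i = 0,1,…,m, pairwise commute elementwise. Then every element x ∈ G that is a product of m commutators [f₁,g₁]⋯[f_m,g_m] with all f_i, g_i ∈ H can be represented as a product of seven F-commutators. -/
open scoped commutatorElement

/-- An `F`-commutator: an element of the form `f[F,h]f⁻¹`. -/
def IsFCommutator {G : Type*} [Group G] (F x : G) : Prop :=
  ∃ f h : G, x = f * ⁅F, h⁆ * f⁻¹

theorem IsFCommutator.inv' {G : Type*} [Group G] {F x : G} (h : IsFCommutator F x) :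
    IsFCommutator F x⁻¹ := by
  obtain ⟨f, h, rfl⟩ := h
  refine ⟨f * h, h⁻¹, ?_⟩
  simp only [commutatorElement_def]
  group

theorem IsFCommutator.conj' {G : Type*} [Group G] {F x : G} (h : IsFCommutator F x) (a : G) :
    IsFCommutator F (a * x * a⁻¹) := by
  obtain ⟨f, h, rfl⟩ := h
  exact ⟨a * f, h, by group⟩

theorem IsFCommutator.one' {G : Type*} [Group G] (F : G) : IsFCommutator F 1 :=
  ⟨1, 1, by simp⟩

/-- Tail products. -/
theorem exists_tail_products {K : Type*} [Group K] : ∀ (n : ℕ) (c : Fin n → K),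
    ∃ Y : Fin (n + 1) → K, Y 0 = (List.ofFn c).prod ∧ Y (Fin.last n) = 1 ∧
      ∀ i : Fin n, Y i.castSucc = c i * Y i.succ := by
  intro n
  induction n with
  | zero => intro c; exact ⟨fun _ => 1, by simp, rfl, fun i => i.elim0⟩
  | succ n ih =>
    intro c
    obtain ⟨Y, h0, hl, hs⟩ := ih (fun i => c i.succ)
    refine ⟨Fin.cons (c 0 * Y 0) Y, ?_, ?_, ?_⟩
    · simp [List.ofFn_succ, h0]
    · rw [← Fin.succ_last, Fin.cons_succ, hl]
    · intro i
      refine Fin.cases ?_ (fun j => ?_) i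
      · simp
      · rw [← Fin.succ_castSucc, Fin.cons_succ, Fin.cons_succ, hs]

/-- `y ↦ (1, y)`. -/
def consHom (K : Type*) [Group K] (m : ℕ) : (Fin m → K) →* (Fin (m + 1) → K) where
  toFun y := Fin.cons 1 y
  map_one' := by
    funext i; refine Fin.cases ?_ (fun j => ?_) i <;> simp
  map_mul' a b := by
    funext i; refine Fin.cases ?_ (fun j => ?_) i <;> simp

/-- `y ↦ (y, 1)`. -/
def snocHom (K : Type*) [Group K] (m : ℕ) : (Fin m → K) →* (Fin (m + 1) → K) where
  toFun y := Fin.snoc (α := fun _ => K) y 1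
  map_one' := by
    funext i; refine Fin.lastCases ?_ (fun j => ?_) i <;> simp
  map_mul' a b := by
    funext i; refine Fin.lastCases ?_ (fun j => ?_) i <;> simp

theorem consHom_mulSingle (K : Type*) [Group K] (m : ℕ) (i : Fin m) (a : K) :
    consHom K m (Pi.mulSingle i a) = Pi.mulSingle i.succ a := by
  funext j
  refine Fin.cases ?_ (fun j => ?_) j
  · simp [consHom, Pi.mulSingle_apply, (Fin.succ_ne_zero i).symm]
  · simp [consHom, Pi.mulSingle_apply]

theorem snocHom_mulSingle (K : Type*) [Group K] (m : ℕ) (i : Fin m) (a : K) :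
    snocHom K m (Pi.mulSingle i a) = Pi.mulSingle i.castSucc a := by
  funext j
  refine Fin.lastCases ?_ (fun j => ?_) j
  · simp [snocHom, Pi.mulSingle_apply, (Fin.castSucc_lt_last i).ne']
  · simp [snocHom, Pi.mulSingle_apply]

/-- If the conjugates `FⁱHF⁻ⁱ`, `i = 0,…,m`, pairwise commute elementwise, then
any product of `m` commutators of elements of `H` is a product of seven
`F`-commutators. -/
theorem prod_seven_F_commutators_of_m_displaceable {G : Type*} [Group G]
    (H : Subgroup G) (m : ℕ) (hm : 1 ≤ m) (F : G)
    (hd : ∀ i j : ℕ, i ≤ m → j ≤ m → i ≠ j →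
      ∀ a ∈ H, ∀ b ∈ H, Commute (F ^ i * a * (F ^ i)⁻¹) (F ^ j * b * (F ^ j)⁻¹))
    (x : G) (f g : Fin m → G) (hf : ∀ i, f i ∈ H) (hg : ∀ i, g i ∈ H)
    (hx : x = (List.ofFn fun i => ⁅f i, g i⁆).prod) :
    ∃ c : Fin 7 → G, (∀ i, IsFCommutator F (c i)) ∧ x = (List.ofFn c).prod := by
  let φ : Fin (m + 1) → (H →* G) := fun i => (MulAut.conj (F ^ (i : ℕ))).toMonoidHom.comp H.subtype
  have hcomm : Pairwise fun i j => ∀ a b, Commute (φ i a) (φ j b) := by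
    intro i j hij a b
    exact hd i j (by omega) (by omega) (fun h => hij (Fin.ext h)) a a.2 b b.2
  let Φ : (Fin (m + 1) → H) →* G := MonoidHom.noncommPiCoprod φ hcomm
  have hΦ : ∀ i a, Φ (Pi.mulSingle i a) = F ^ (i : ℕ) * a * (F ^ (i : ℕ))⁻¹ := by
    intro i a
    exact MonoidHom.noncommPiCoprod_mulSingle (hcomm := hcomm) φ i a
  have hshift : ((MulAut.conj F).toMonoidHom.comp Φ).comp (snocHom H m)
      = Φ.comp (consHom H m) := by
    apply MonoidHom.pi_ext
    intro i a
    simp only [MonoidHom.comp_apply, consHom_mulSingle, snocHom_mulSingle, hΦ]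
    simp [pow_succ', mul_assoc]
  have key : ∀ c : Fin m → H,
      IsFCommutator F (((List.ofFn c).prod : H)⁻¹ * Φ (consHom H m c)) := by
    intro c
    obtain ⟨Y, h0, hl, hs⟩ := exists_tail_products m c
    refine ⟨1, Φ Y, ?_⟩
    have e1 : snocHom H m (fun i => Y i.castSucc) = Y := by
      funext j
      refine Fin.lastCases ?_ (fun j => ?_) j
      · simp [snocHom, hl]
      · simp [snocHom]
    have e2 := DFunLike.congr_fun hshift (fun i => Y i.castSucc)
    simp only [MonoidHom.comp_apply, e1] at e2
    have e2' : F * Φ Y * F⁻¹ = Φ (consHom H m (fun i => Y i.castSucc)) := e2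
    have e3 : consHom H m (fun i => Y i.castSucc) * Y⁻¹
        = Pi.mulSingle 0 ((List.ofFn c).prod)⁻¹ * consHom H m c := by
      funext j
      refine Fin.cases ?_ (fun j => ?_) j
      · simp [consHom, h0]
      · simp [consHom, hs, Pi.mulSingle_apply, Fin.succ_ne_zero]
    have e4 := congrArg Φ e3
    rw [map_mul, map_mul, map_inv, hΦ] at e4
    rw [commutatorElement_def, e2', one_mul, inv_one, mul_one, e4]
    simp
  let f' : Fin m → H := fun i => ⟨f i, hf i⟩
  let g' : Fin m → H := fun i => ⟨g i, hg i⟩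
  have hx' : x = ((List.ofFn ⁅f', g'⁆).prod : H) := by
    rw [hx, ← H.coe_subtype, map_list_prod, List.map_ofFn]
    rfl
  have k1 := key ⁅f', g'⁆
  rw [Subgroup.coe_inv, ← hx'] at k1
  have k2 := key f'
  rw [Subgroup.coe_inv] at k2
  set a : H := (List.ofFn f').prod with ha
  set A := Φ (consHom H m f') with hA
  set B := Φ (consHom H m g') with hB
  have hAB : Φ (consHom H m ⁅f', g'⁆) = ⁅A, B⁆ := by
    rw [map_commutatorElement, map_commutatorElement]
  rw [hAB] at k1
  have haB : Commute (a : G) B := by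
    have e : (a : G) = Φ (Pi.mulSingle 0 a) := by simp [hΦ]
    rw [e, hB]
    refine Commute.map ?_ Φ
    funext j
    refine Fin.cases ?_ (fun j => ?_) j
    · simp [consHom]
    · simp [consHom, Pi.mulSingle_apply, Fin.succ_ne_zero]
  set u : G := (a : G)⁻¹ * A with hu
  have hAu : A = a * u := by simp [hu]
  have c1 := k2.conj' (a : G)
  have c2 := (k2.inv'.conj' B).conj' (a : G)
  have c3 := k1.inv'
  have h1 : (a : G)⁻¹ * B⁻¹ = B⁻¹ * (a : G)⁻¹ := haB.inv_inv.eq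
  have h2 : ⁅A, B⁆ = (a * u * (a : G)⁻¹) * (a * (B * u⁻¹ * B⁻¹) * (a : G)⁻¹) := by
    rw [commutatorElement_def, hAu, mul_inv_rev]
    simp only [mul_assoc, h1, inv_mul_cancel_left]
  have h3 : x = (a * u * (a : G)⁻¹) * ((a * (B * u⁻¹ * B⁻¹) * (a : G)⁻¹) * (x⁻¹ * ⁅A, B⁆)⁻¹) := by
    rw [← mul_assoc, ← h2]
    group
  generalize (a * u * (a : G)⁻¹) = p at *
  generalize (a * (B * u⁻¹ * B⁻¹) * (a : G)⁻¹) = q at *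
  generalize (x⁻¹ * ⁅A, B⁆)⁻¹ = r at *
  refine ⟨![p, q, r, 1, 1, 1, 1], ?_, ?_⟩
  · intro i
    fin_cases i
    · exact c1
    · exact c2
    · exact c3
    all_goals exact IsFCommutator.one' F
  · have h4 : (List.ofFn ![p, q, r, 1, 1, 1, 1]).prod = p * (q * r) := by
      simp
    rw [h4]
    exact h3
end

section
/- Let G be a group, H ≤ G a subgroup, m ≥ 1, and F ∈ G such that the subgroups FⁱHF⁻ⁱ, i = 0,1,…,m, pairwise commute elementwise. If g₀, g₁, …, g_m ∈ H satisfy g₀g₁⋯g_m = 1, then the product ∏_{i=0}^{m} Fⁱg_iF⁻ⁱ is an F-commutator; explicitly, it equals [F, φ⁻¹] where φ = ∏_{i=0}^{m-1} Fⁱφ_iF⁻ⁱ with φ_k = g₀g₁⋯g_k. -/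
open scoped commutatorElement

theorem pp_succ {G : Type*} [Group G] (f : ℕ → G) (n : ℕ) :
    (List.ofFn fun i : Fin (n + 1) => f i).prod =
      (List.ofFn fun i : Fin n => f i).prod * f n := by
  rw [List.ofFn_succ']
  simp [List.concat_eq_append]

theorem commutatorElement_inv_aux {G : Type*} [Group G] (F b : G) :
    ⁅F, b⁻¹⁆ = F * b⁻¹ * F⁻¹ * b := by
  rw [commutatorElement_def, inv_inv]

theorem pp_main {G : Type*} [Group G]
    (H : Subgroup G) (m : ℕ) (F : G)
    (hd : ∀ i j : ℕ, i ≤ m → j ≤ m → i ≠ j →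
      ∀ a ∈ H, ∀ b ∈ H, Commute (F ^ i * a * (F ^ i)⁻¹) (F ^ j * b * (F ^ j)⁻¹))
    (g A B P : ℕ → G) (hg : ∀ i ≤ m, g i ∈ H)
    (hA0 : A 0 = 1) (hB0 : B 0 = 1) (hP0 : P 0 = 1)
    (hP : ∀ n, P (n + 1) = P n * g n)
    (hA : ∀ n, A (n + 1) = A n * (F ^ n * g n * (F ^ n)⁻¹))
    (hB : ∀ n, B (n + 1) = B n * (F ^ n * P (n + 1) * (F ^ n)⁻¹)) :
    ∀ n ≤ m, F * B n * F⁻¹ * A (n + 1) = B (n + 1) := by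
  have hPH : ∀ n ≤ m + 1, P n ∈ H := by
    intro n
    induction n with
    | zero => intro _; rw [hP0]; exact H.one_mem
    | succ k ih =>
      intro hk
      rw [hP]
      exact H.mul_mem (ih (by omega)) (hg k (by omega))
  have hc : ∀ k ≤ m, ∀ a ∈ H, ∀ n ≤ k, Commute (F ^ k * a * (F ^ k)⁻¹) (A n) := by
    intro k hk a ha n
    induction n with
    | zero => intro _; rw [hA0]; exact Commute.one_right _
    | succ l ih =>
      intro hl
      rw [hA]
      exact (ih (by omega)).mul_right
        (hd k l hk (by omega) (by omega) a ha _ (hg l (by omega)))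
  intro n
  induction n with
  | zero => intro _; simp [hA, hB, hP, hA0, hB0, hP0]
  | succ n ih =>
    intro hn
    have h1 := ih (by omega)
    have h2 := (hc (n + 1) hn (P (n + 1)) (hPH _ (by omega)) (n + 1) le_rfl).eq
    have h3 : F * B (n + 1) * F⁻¹ =
        F * B n * F⁻¹ * (F ^ (n + 1) * P (n + 1) * (F ^ (n + 1))⁻¹) := by
      rw [hB n, pow_succ' F n]; group
    rw [h3, hA (n + 1), hB (n + 1), hP (n + 1), ← h1]
    calc _ = F * B n * F⁻¹ * ((F ^ (n + 1) * P (n + 1) * (F ^ (n + 1))⁻¹) * A (n + 1)) *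
          (F ^ (n + 1) * g (n + 1) * (F ^ (n + 1))⁻¹) := by simp only [mul_assoc]
      _ = _ := by rw [h2]; simp only [mul_assoc, inv_mul_cancel_left]

/-- If the conjugates `FⁱHF⁻ⁱ`, `i = 0,…,m`, pairwise commute elementwise and
`g₀g₁⋯g_m = 1` with all `g_i ∈ H`, then `∏_{i=0}^{m} Fⁱg_iF⁻ⁱ` is an
`F`-commutator; explicitly it equals `[F, φ⁻¹]` where
`φ = ∏_{i=0}^{m-1} Fⁱ(g₀⋯g_i)F⁻ⁱ`. -/
theorem prod_conj_eq_F_commutator {G : Type*} [Group G]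
    (H : Subgroup G) (m : ℕ) (hm : 1 ≤ m) (F : G)
    (hd : ∀ i j : ℕ, i ≤ m → j ≤ m → i ≠ j →
      ∀ a ∈ H, ∀ b ∈ H, Commute (F ^ i * a * (F ^ i)⁻¹) (F ^ j * b * (F ^ j)⁻¹))
    (g : ℕ → G) (hg : ∀ i ≤ m, g i ∈ H)
    (hprod : (List.ofFn fun i : Fin (m + 1) => g i).prod = 1) :
    (List.ofFn fun i : Fin (m + 1) => F ^ (i : ℕ) * g i * (F ^ (i : ℕ))⁻¹).prod =
      ⁅F, ((List.ofFn fun i : Fin m =>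
        F ^ (i : ℕ) * (List.ofFn fun j : Fin ((i : ℕ) + 1) => g j).prod *
          (F ^ (i : ℕ))⁻¹).prod)⁻¹⁆ ∧
    IsFCommutator F
      (List.ofFn fun i : Fin (m + 1) => F ^ (i : ℕ) * g i * (F ^ (i : ℕ))⁻¹).prod := by
  have key := pp_main H m F hd g
    (fun n => (List.ofFn fun i : Fin n => F ^ (i : ℕ) * g i * (F ^ (i : ℕ))⁻¹).prod)
    (fun n => (List.ofFn fun i : Fin n =>
        F ^ (i : ℕ) * (List.ofFn fun j : Fin ((i : ℕ) + 1) => g j).prod *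
          (F ^ (i : ℕ))⁻¹).prod)
    (fun n => (List.ofFn fun i : Fin n => g i).prod) hg (by simp) (by simp) (by simp)
    (fun n => pp_succ g n)
    (fun n => pp_succ (fun i => F ^ i * g i * (F ^ i)⁻¹) n)
    (fun n => pp_succ (fun i => F ^ i * (List.ofFn fun j : Fin (i + 1) => g j).prod *
          (F ^ i)⁻¹) n) m le_rfl
  have hl := pp_succ (fun i => F ^ i * (List.ofFn fun j : Fin (i + 1) => g j).prod *
          (F ^ i)⁻¹) m
  simp only [hprod, mul_one, mul_inv_cancel] at hl
  simp only [hl] at key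
  have e := eq_inv_mul_of_mul_eq key
  rw [mul_inv_rev, mul_inv_rev, inv_inv, ← mul_assoc] at e
  have e2 := e.trans (commutatorElement_inv_aux F _).symm
  exact ⟨e2, 1, _, by rw [one_mul, inv_one, mul_one]; exact e2⟩
end

section
/- Let G be a group, H ≤ G a subgroup, m ≥ 1, and F ∈ G such that the subgroups FⁱHF⁻ⁱ, i = 0,1,…,m, pairwise commute elementwise. Then for any g₁, g₂, …, g_m ∈ H, the product g_m g_{m-1} ⋯ g₁ equals an F-commutator times the product ∏_{i=1}^{m} Fⁱg_iF⁻ⁱ, i.e., there exists an F-commutator x with g_m⋯g₁ = x · ∏_{i=1}^{m} Fⁱg_iF⁻ⁱ. -/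
open scoped commutatorElement

theorem aux_D {G : Type*} [Group G]
    (H : Subgroup G) (m : ℕ) (F : G)
    (hd : ∀ i j : ℕ, i ≤ m → j ≤ m → i ≠ j →
      ∀ a ∈ H, ∀ b ∈ H, Commute (F ^ i * a * (F ^ i)⁻¹) (F ^ j * b * (F ^ j)⁻¹))
    (a : G) (ha : a ∈ H) (n : ℕ) (hn : n ≤ m) :
    ∃ D : G, (∀ j, n ≤ j → j ≤ m → ∀ b ∈ H, Commute D (F ^ j * b * (F ^ j)⁻¹)) ∧
      (∀ b ∈ H, Commute (F * D * F⁻¹) b) ∧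
      F * D * F⁻¹ * a = D * (F ^ n * a * (F ^ n)⁻¹) := by
  induction n with
  | zero => exact ⟨1, by simp, by simp, by simp⟩
  | succ n ih =>
    obtain ⟨D, h1, h2, h3⟩ := ih (by omega)
    have e : F * (D * (F ^ n * a * (F ^ n)⁻¹)) * F⁻¹
        = (F * D * F⁻¹) * (F ^ (n+1) * a * (F ^ (n+1))⁻¹) := by
      rw [pow_succ']; group
    have c0 : ∀ b ∈ H, Commute (F ^ (n+1) * a * (F ^ (n+1))⁻¹) b := fun b hb => by
      simpa using hd (n+1) 0 hn (by omega) (by omega) a ha b hb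
    refine ⟨D * (F ^ n * a * (F ^ n)⁻¹), ?_, ?_, ?_⟩
    · intro j hj hjm b hb
      exact (h1 j (by omega) hjm b hb).mul_left
        (hd n j (by omega) hjm (by omega) a ha b hb)
    · intro b hb
      rw [e]
      exact (h2 b hb).mul_left (c0 b hb)
    · rw [e, mul_assoc, (c0 a ha).eq, ← mul_assoc, h3]

theorem aux_main {G : Type*} [Group G]
    (H : Subgroup G) (m : ℕ) (F : G)
    (hd : ∀ i j : ℕ, i ≤ m → j ≤ m → i ≠ j →
      ∀ a ∈ H, ∀ b ∈ H, Commute (F ^ i * a * (F ^ i)⁻¹) (F ^ j * b * (F ^ j)⁻¹))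
    (g : ℕ → G) (hg : ∀ i, 1 ≤ i → i ≤ m → g i ∈ H) (k : ℕ) (hk : k ≤ m) :
    ∃ h : G, (∀ j, k ≤ j → j ≤ m → ∀ b ∈ H, Commute h (F ^ j * b * (F ^ j)⁻¹)) ∧
      (∀ b ∈ H, Commute (F * h * F⁻¹) b) ∧
      (∀ j, k < j → j ≤ m → ∀ b ∈ H, Commute (List.ofFn fun i : Fin k =>
          F ^ ((i : ℕ) + 1) * g ((i : ℕ) + 1) * (F ^ ((i : ℕ) + 1))⁻¹).prod
          (F ^ j * b * (F ^ j)⁻¹)) ∧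
      (List.ofFn fun i : Fin k => g (k - (i : ℕ))).prod =
        (F * h * F⁻¹ * h⁻¹) * (List.ofFn fun i : Fin k =>
          F ^ ((i : ℕ) + 1) * g ((i : ℕ) + 1) * (F ^ ((i : ℕ) + 1))⁻¹).prod := by
  induction k with
  | zero => exact ⟨1, by simp, by simp, by simp, by simp⟩
  | succ k ih =>
    obtain ⟨h, h1, h2, h3, h4⟩ := ih (by omega)
    have ha : g (k+1) ∈ H := hg _ (by omega) hk
    obtain ⟨D, d1, d2, d3⟩ := aux_D H m F hd (g (k+1)) ha (k+1) hk
    have eP : (List.ofFn fun i : Fin (k+1) => g (k + 1 - (i : ℕ))).prod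
        = g (k+1) * (List.ofFn fun i : Fin k => g (k - (i : ℕ))).prod := by
      simp [List.ofFn_succ]
    have eQ : (List.ofFn fun i : Fin (k+1) =>
          F ^ ((i : ℕ) + 1) * g ((i : ℕ) + 1) * (F ^ ((i : ℕ) + 1))⁻¹).prod
        = (List.ofFn fun i : Fin k =>
          F ^ ((i : ℕ) + 1) * g ((i : ℕ) + 1) * (F ^ ((i : ℕ) + 1))⁻¹).prod
          * (F ^ (k + 1) * g (k + 1) * (F ^ (k + 1))⁻¹) := by
      rw [List.ofFn_succ', List.concat_eq_append, List.prod_append, List.prod_singleton]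
      simp
    have e : F * (h * D⁻¹) * F⁻¹ = (F * h * F⁻¹) * (F * D * F⁻¹)⁻¹ := by group
    rw [eP, eQ, h4]
    have cQ := h3 (k+1) (by omega) hk _ ha
    have ch := h1 (k+1) (by omega) hk _ ha
    have cg := h2 _ ha
    refine ⟨h * D⁻¹, ?_, ?_, ?_, ?_⟩
    · intro j hj hjm b hb
      exact (h1 j (by omega) hjm b hb).mul_left (d1 j hj hjm b hb).inv_left
    · intro b hb
      rw [e]
      exact (h2 b hb).mul_left (d2 b hb).inv_left
    · intro j hj hjm b hb
      exact (h3 j (by omega) hjm b hb).mul_left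
        (hd (k+1) j hk hjm (by omega) _ ha b hb)
    · rw [e]
      generalize (List.ofFn fun i : Fin k =>
          F ^ ((i : ℕ) + 1) * g ((i : ℕ) + 1) * (F ^ ((i : ℕ) + 1))⁻¹).prod = Q at *
      generalize F ^ (k + 1) * g (k + 1) * (F ^ (k + 1))⁻¹ = T at *
      generalize F * h * F⁻¹ = X at *
      generalize F * D * F⁻¹ = Y at *
      generalize g (k+1) = a at *
      have hY : Y⁻¹ * D = a * T⁻¹ := by
        rw [inv_mul_eq_iff_eq_mul, ← mul_assoc, d3]; group
      have hc : T⁻¹ * (h⁻¹ * Q) * T = h⁻¹ * Q := by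
        have : Commute (h⁻¹ * Q) T := ch.inv_left.mul_left cQ
        rw [mul_assoc, this.eq]; group
      calc a * (X * h⁻¹ * Q) = (a * X) * (h⁻¹ * Q) := by group
        _ = (X * a) * (T⁻¹ * (h⁻¹ * Q) * T) := by rw [hc, cg.eq]
        _ = X * (a * T⁻¹) * (h⁻¹ * Q) * T := by group
        _ = X * (Y⁻¹ * D) * (h⁻¹ * Q) * T := by rw [hY]
        _ = _ := by group

/-- If the conjugates `FⁱHF⁻ⁱ`, `i = 0,…,m`, pairwise commute elementwise, then
for `g₁,…,g_m ∈ H` the product `g_m g_{m-1} ⋯ g₁` equals an `F`-commutator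
times `∏_{i=1}^{m} Fⁱg_iF⁻ⁱ`. -/
theorem rearrange_prod_F_commutator {G : Type*} [Group G]
    (H : Subgroup G) (m : ℕ) (hm : 1 ≤ m) (F : G)
    (hd : ∀ i j : ℕ, i ≤ m → j ≤ m → i ≠ j →
      ∀ a ∈ H, ∀ b ∈ H, Commute (F ^ i * a * (F ^ i)⁻¹) (F ^ j * b * (F ^ j)⁻¹))
    (g : ℕ → G) (hg : ∀ i, 1 ≤ i → i ≤ m → g i ∈ H) :
    ∃ x : G, IsFCommutator F x ∧
      (List.ofFn fun k : Fin m => g (m - (k : ℕ))).prod =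
        x * (List.ofFn fun k : Fin m =>
          F ^ ((k : ℕ) + 1) * g ((k : ℕ) + 1) * (F ^ ((k : ℕ) + 1))⁻¹).prod := by
  obtain ⟨h, -, -, -, h4⟩ := aux_main H m F hd g hg m le_rfl
  exact ⟨_, ⟨1, h, by simp [commutatorElement_def]⟩, h4⟩
end

section
/- Let G be a group, H ≤ G a subgroup, and F ∈ G such that the subgroups H, FHF⁻¹ and F²HF⁻² pairwise commute elementwise. Then every commutator [f,g] with f,g ∈ H is a product of two F-commutators; explicitly, [f,g] is the product of the two F-commutators (fg)·F g⁻¹ F⁻¹·F² f⁻¹ F⁻² and (f⁻¹g⁻¹)·F g F⁻¹·F² f F⁻². -/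
open scoped commutatorElement

theorem isFComm_aux {G : Type*} [Group G]
    (H : Subgroup G) (F : G)
    (hd : ∀ i j : ℕ, i ≤ 2 → j ≤ 2 → i ≠ j →
      ∀ a ∈ H, ∀ b ∈ H, Commute (F ^ i * a * (F ^ i)⁻¹) (F ^ j * b * (F ^ j)⁻¹))
    (f g : G) (hf : f ∈ H) (hg : g ∈ H) :
    IsFCommutator F ((f * g) * (F * g⁻¹ * F⁻¹) * (F ^ 2 * f⁻¹ * (F ^ 2)⁻¹)) := by
  refine ⟨1, (g⁻¹ * f⁻¹) * (F * f⁻¹ * F⁻¹), ?_⟩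
  have h01 := hd 0 1 (by omega) (by omega) (by omega) (f * g) (H.mul_mem hf hg)
    g⁻¹ (H.inv_mem hg)
  have h02 := hd 0 2 (by omega) (by omega) (by omega) (f * g) (H.mul_mem hf hg)
    f⁻¹ (H.inv_mem hf)
  have h12 := hd 1 2 (by omega) (by omega) (by omega) f hf f⁻¹ (H.inv_mem hf)
  simp only [pow_zero, one_mul, inv_one, mul_one, pow_one] at h01 h02 h12
  have e : (1 : G) * ⁅F, (g⁻¹ * f⁻¹) * (F * f⁻¹ * F⁻¹)⁆ * 1⁻¹
      = (F * (g⁻¹ * f⁻¹) * F⁻¹) * ((F ^ 2 * f⁻¹ * (F ^ 2)⁻¹) * (F * f * F⁻¹)) * (f * g) := by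
    rw [commutatorElement_def]; group
  have e2 : (F * (g⁻¹ * f⁻¹) * F⁻¹) * ((F * f * F⁻¹) * (F ^ 2 * f⁻¹ * (F ^ 2)⁻¹)) * (f * g)
      = (F * g⁻¹ * F⁻¹) * ((F ^ 2 * f⁻¹ * (F ^ 2)⁻¹) * (f * g)) := by group
  rw [e, ← h12.eq, e2, ← h02.eq, ← mul_assoc, h01.eq, mul_assoc]
  simp only [mul_assoc]

/-- If `H`, `FHF⁻¹` and `F²HF⁻²` pairwise commute elementwise, then every
commutator of elements of `H` is a product of the two explicitly given
`F`-commutators. -/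
theorem commutator_eq_prod_two_F_commutators {G : Type*} [Group G]
    (H : Subgroup G) (F : G)
    (hd : ∀ i j : ℕ, i ≤ 2 → j ≤ 2 → i ≠ j →
      ∀ a ∈ H, ∀ b ∈ H, Commute (F ^ i * a * (F ^ i)⁻¹) (F ^ j * b * (F ^ j)⁻¹))
    (f g : G) (hf : f ∈ H) (hg : g ∈ H) :
    IsFCommutator F ((f * g) * (F * g⁻¹ * F⁻¹) * (F ^ 2 * f⁻¹ * (F ^ 2)⁻¹)) ∧
    IsFCommutator F ((f⁻¹ * g⁻¹) * (F * g * F⁻¹) * (F ^ 2 * f * (F ^ 2)⁻¹)) ∧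
    ⁅f, g⁆ = ((f * g) * (F * g⁻¹ * F⁻¹) * (F ^ 2 * f⁻¹ * (F ^ 2)⁻¹)) *
      ((f⁻¹ * g⁻¹) * (F * g * F⁻¹) * (F ^ 2 * f * (F ^ 2)⁻¹)) := by
  have hfinv := H.inv_mem hf
  have hginv := H.inv_mem hg
  refine ⟨isFComm_aux H F hd f g hf hg, ?_, ?_⟩
  · simpa only [inv_inv] using isFComm_aux H F hd f⁻¹ g⁻¹ hfinv hginv
  have h01 := hd 0 1 (by omega) (by omega) (by omega) (f⁻¹ * g⁻¹) (H.mul_mem hfinv hginv)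
    g⁻¹ hginv
  have h02 := hd 0 2 (by omega) (by omega) (by omega) (f⁻¹ * g⁻¹) (H.mul_mem hfinv hginv)
    f⁻¹ hfinv
  have h12 := hd 1 2 (by omega) (by omega) (by omega) g hg f⁻¹ hfinv
  simp only [pow_zero, one_mul, inv_one, mul_one, pow_one] at h01 h02 h12
  have hA : (F * g⁻¹ * F⁻¹) * (F * g * F⁻¹) = 1 := by group
  have hB : (F ^ 2 * f⁻¹ * (F ^ 2)⁻¹) * (F ^ 2 * f * (F ^ 2)⁻¹) = 1 := by group
  have hC : ⁅f, g⁆ = (f * g) * (f⁻¹ * g⁻¹) := by rw [commutatorElement_def]; group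
  rw [hC]
  generalize F ^ 2 * f⁻¹ * (F ^ 2)⁻¹ = B at *
  generalize F ^ 2 * f * (F ^ 2)⁻¹ = Binv at *
  generalize F * g⁻¹ * F⁻¹ = A at *
  generalize F * g * F⁻¹ = Ainv at *
  generalize f⁻¹ * g⁻¹ = c at *
  generalize f * g = d at *
  symm
  calc d * A * B * (c * Ainv * Binv) = d * A * (B * c) * Ainv * Binv := by simp only [mul_assoc]
    _ = d * (A * c) * (B * Ainv) * Binv := by rw [← h02.eq]; simp only [mul_assoc]
    _ = d * c * (A * Ainv) * (B * Binv) := by rw [← h01.eq, ← h12.eq]; simp only [mul_assoc]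
    _ = d * c := by rw [hA, hB, mul_one, mul_one]
end

section
/- Let H₁, …, H_N be subgroups of a group G that pairwise commute elementwise, and let K = H₁·H₂·⋯·H_N (which is a subgroup of G). Then for every homogeneous quasi-morphism φ on K, sup_{x,y ∈ K} φ([x,y]) = Σ_{i=1}^{N} sup_{x,y ∈ H_i} φ([x,y]). -/
open scoped commutatorElement

lemma aux_commute_prod {G : Type*} [Group G] (c : G) : ∀ (n : ℕ) (b : Fin n → G),
    (∀ i, Commute c (b i)) → Commute c (List.ofFn b).prod := by
  intro n b h
  apply Commute.list_prod_right
  intro x hx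
  obtain ⟨i, rfl⟩ := (List.mem_ofFn' b x).1 hx
  exact h i

lemma aux_prod_mul {G : Type*} [Group G] : ∀ (n : ℕ) (a b : Fin n → G),
    (∀ i j, i ≠ j → Commute (a i) (b j)) →
    (List.ofFn (fun i => a i * b i)).prod = (List.ofFn a).prod * (List.ofFn b).prod := by
  intro n
  induction n with
  | zero => intro a b _; simp
  | succ n ih =>
    intro a b h
    simp only [List.ofFn_succ, List.prod_cons]
    rw [ih (fun i => a i.succ) (fun i => b i.succ)
      (fun i j hij => h _ _ (fun e => hij (Fin.succ_injective _ e)))]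
    have hc : Commute (b 0) (List.ofFn (fun i : Fin n => a i.succ)).prod :=
      aux_commute_prod _ _ _ (fun i => (h _ _ (Fin.succ_ne_zero i)).symm)
    have := hc.eq
    calc a 0 * b 0 * ((List.ofFn (fun i : Fin n => a i.succ)).prod * (List.ofFn (fun i : Fin n => b i.succ)).prod)
        = a 0 * (b 0 * (List.ofFn (fun i : Fin n => a i.succ)).prod) * (List.ofFn (fun i : Fin n => b i.succ)).prod := by
          simp only [mul_assoc]
      _ = _ := by rw [this]; simp only [mul_assoc]

lemma aux_prod_one {G : Type*} [Group G] (n : ℕ) :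
    (List.ofFn (fun _ : Fin n => (1 : G))).prod = 1 := by
  simp

lemma aux_prod_single {G : Type*} [Group G] : ∀ (n : ℕ) (i : Fin n) (a : G),
    (List.ofFn (fun j => if j = i then a else 1)).prod = a := by
  intro n
  induction n with
  | zero => intro i; exact i.elim0
  | succ n ih =>
    intro i a
    simp only [List.ofFn_succ, List.prod_cons]
    refine Fin.cases ?_ (fun k => ?_) i
    · simp [Fin.succ_ne_zero]
    · simp only [Fin.succ_inj, ih k a]
      simp [(Fin.succ_ne_zero k).symm]

lemma aux_sum {G : Type*} [Group G] (K : Subgroup G) (φ : G → ℝ) (h1 : φ 1 = 0)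
    (hadd : ∀ a ∈ K, ∀ b ∈ K, Commute a b → φ (a * b) = φ a + φ b) :
    ∀ (n : ℕ) (a : Fin n → G), (∀ i, a i ∈ K) → (∀ i j, i ≠ j → Commute (a i) (a j)) →
      φ (List.ofFn a).prod = ∑ i, φ (a i) := by
  intro n
  induction n with
  | zero => intro a _ _; simpa using h1
  | succ n ih =>
    intro a hK hc
    rw [List.ofFn_succ, List.prod_cons, Fin.sum_univ_succ, hadd _ (hK 0), ih]
    · exact fun i => hK _
    · exact fun i j hij => hc _ _ (fun e => hij (Fin.succ_injective _ e))
    · apply Subgroup.list_prod_mem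
      intro x hx
      obtain ⟨i, rfl⟩ := (List.mem_ofFn' _ x).1 hx
      exact hK _
    · exact aux_commute_prod _ _ _ (fun i => hc _ _ (Fin.succ_ne_zero i).symm)



/-- If the subgroups `H₁,…,H_N` pairwise commute elementwise and
`K = H₁ ⋯ H_N` is their product, then for every homogeneous quasi-morphism `φ`
on `K` one has `sup_{x,y ∈ K} φ([x,y]) = Σᵢ sup_{x,y ∈ Hᵢ} φ([x,y])`. -/
theorem sup_commutator_quasimorphism_prod_subgroups {G : Type*} [Group G]
    (N : ℕ) (H : Fin N → Subgroup G)
    (hcomm : ∀ i j, i ≠ j → ∀ a ∈ H i, ∀ b ∈ H j, Commute a b)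
    (K : Subgroup G)
    (hK : ∀ x : G, x ∈ K ↔
      ∃ h : Fin N → G, (∀ i, h i ∈ H i) ∧ x = (List.ofFn h).prod)
    (φ : G → ℝ)
    (hqm : ∃ C : ℝ, ∀ a ∈ K, ∀ b ∈ K, |φ (a * b) - φ a - φ b| ≤ C)
    (hhom : ∀ a ∈ K, ∀ n : ℤ, φ (a ^ n) = n * φ a) :
    sSup {r : ℝ | ∃ x ∈ K, ∃ y ∈ K, r = φ ⁅x, y⁆} =
      ∑ i : Fin N, sSup {r : ℝ | ∃ x ∈ H i, ∃ y ∈ H i, r = φ ⁅x, y⁆} := by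
  obtain ⟨C, hC⟩ := hqm
  have h1 : φ 1 = 0 := by simpa using hhom 1 K.one_mem 0
  have hinv : ∀ a ∈ K, φ a⁻¹ = - φ a := fun a ha => by simpa using hhom a ha (-1)
  have hadd : ∀ a ∈ K, ∀ b ∈ K, Commute a b → φ (a * b) = φ a + φ b := by
    intro a ha b hb hab
    have key : ∀ n : ℕ, n * |φ (a * b) - φ a - φ b| ≤ C := by
      intro n
      have h := hC (a ^ (n : ℤ)) (K.zpow_mem ha _) (b ^ (n : ℤ)) (K.zpow_mem hb _)
      rw [← hab.mul_zpow, hhom _ (K.mul_mem ha hb), hhom _ ha, hhom _ hb, ← mul_sub, ← mul_sub,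
        abs_mul] at h
      simpa using h
    by_contra hne
    have hpos : 0 < |φ (a * b) - φ a - φ b| := by
      rw [abs_pos]; intro h; apply hne; linarith
    obtain ⟨n, hn⟩ := exists_nat_gt (C / |φ (a * b) - φ a - φ b|)
    rw [div_lt_iff₀ hpos] at hn
    linarith [key n]
  have hHK : ∀ i, H i ≤ K := by
    intro i a ha
    refine (hK a).2 ⟨fun j => if j = i then a else 1, ?_, (aux_prod_single N i a).symm⟩
    intro j
    by_cases hj : j = i
    · subst hj; simpa using ha
    · simp [hj, (H j).one_mem]
  have hbd : ∀ x ∈ K, ∀ y ∈ K, φ ⁅x, y⁆ ≤ 3 * C := by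
    intro x hx y hy
    have e1 := abs_le.1 (hC x hx y hy)
    have e2 := abs_le.1 (hC (x * y) (K.mul_mem hx hy) x⁻¹ (K.inv_mem hx))
    have e3 := abs_le.1 (hC (x * y * x⁻¹) (K.mul_mem (K.mul_mem hx hy) (K.inv_mem hx)) y⁻¹
      (K.inv_mem hy))
    rw [hinv x hx] at e2
    rw [hinv y hy] at e3
    rw [commutatorElement_def]
    linarith [e1.2, e2.2, e3.2]
  have hform : ∀ x y : Fin N → G, (∀ i, x i ∈ H i) → (∀ i, y i ∈ H i) →
      φ ⁅(List.ofFn x).prod, (List.ofFn y).prod⁆ = ∑ i, φ ⁅x i, y i⁆ := by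
    intro x y hx hy
    have hpi : ∀ z : Fin N → G, (∀ i, z i ∈ H i) →
        (List.ofFn fun i => (z i)⁻¹).prod = ((List.ofFn z).prod)⁻¹ := by
      intro z hz
      have := aux_prod_mul N z (fun i => (z i)⁻¹)
        (fun i j hij => hcomm i j hij _ (hz i) _ ((H j).inv_mem (hz j)))
      rw [eq_comm, inv_eq_iff_mul_eq_one, ← this]
      simp
    have hxi := fun i => (H i).inv_mem (hx i)
    have hyi := fun i => (H i).inv_mem (hy i)
    have hxy := fun i => (H i).mul_mem (hx i) (hy i)
    have hxyx := fun i => (H i).mul_mem (hxy i) (hxi i)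
    have hall := fun i => (H i).mul_mem (hxyx i) (hyi i)
    have e : (List.ofFn fun i => x i * y i * (x i)⁻¹ * (y i)⁻¹).prod =
        ⁅(List.ofFn x).prod, (List.ofFn y).prod⁆ := by
      rw [aux_prod_mul N (fun i => x i * y i * (x i)⁻¹) (fun i => (y i)⁻¹)
          (fun i j hij => hcomm i j hij _ (hxyx i) _ (hyi j)),
        aux_prod_mul N (fun i => x i * y i) (fun i => (x i)⁻¹)
          (fun i j hij => hcomm i j hij _ (hxy i) _ (hxi j)),
        aux_prod_mul N x y (fun i j hij => hcomm i j hij _ (hx i) _ (hy j)),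
        hpi x hx, hpi y hy, commutatorElement_def]
    rw [← e, aux_sum K φ h1 hadd N _ (fun i => hHK i (hall i))
      (fun i j hij => hcomm i j hij _ (hall i) _ (hall j))]
    simp only [commutatorElement_def]
  have hbK : BddAbove {r : ℝ | ∃ x ∈ K, ∃ y ∈ K, r = φ ⁅x, y⁆} := by
    refine ⟨3 * C, ?_⟩
    rintro r ⟨x, hx, y, hy, rfl⟩
    exact hbd x hx y hy
  have hbH : ∀ i, BddAbove {r : ℝ | ∃ x ∈ H i, ∃ y ∈ H i, r = φ ⁅x, y⁆} := by
    intro i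
    refine ⟨3 * C, ?_⟩
    rintro r ⟨x, hx, y, hy, rfl⟩
    exact hbd x (hHK i hx) y (hHK i hy)
  apply le_antisymm
  · refine csSup_le ⟨φ ⁅(1 : G), 1⁆, 1, K.one_mem, 1, K.one_mem, rfl⟩ ?_
    rintro r ⟨x, hx, y, hy, rfl⟩
    obtain ⟨a, ha, rfl⟩ := (hK x).1 hx
    obtain ⟨b, hb, rfl⟩ := (hK y).1 hy
    rw [hform a b ha hb]
    exact Finset.sum_le_sum fun i _ => le_csSup (hbH i) ⟨_, ha i, _, hb i, rfl⟩
  · apply le_of_forall_pos_le_add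
    intro ε hε
    have hN : (0 : ℝ) < N + 1 := by positivity
    have hδ : 0 < ε / (N + 1) := by positivity
    have hex : ∀ i, ∃ x ∈ H i, ∃ y ∈ H i,
        sSup {r : ℝ | ∃ x ∈ H i, ∃ y ∈ H i, r = φ ⁅x, y⁆} ≤ φ ⁅x, y⁆ + ε / (N + 1) := by
      intro i
      obtain ⟨r, ⟨x, hx, y, hy, rfl⟩, hr⟩ := exists_lt_of_lt_csSup
        (s := {r : ℝ | ∃ x ∈ H i, ∃ y ∈ H i, r = φ ⁅x, y⁆})
        ⟨_, 1, (H i).one_mem, 1, (H i).one_mem, rfl⟩ (sub_lt_self _ hδ)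
      exact ⟨x, hx, y, hy, by linarith⟩
    choose x hx y hy hxy using hex
    calc _ ≤ ∑ i, (φ ⁅x i, y i⁆ + ε / (N + 1)) := Finset.sum_le_sum fun i _ => hxy i
      _ = φ ⁅(List.ofFn x).prod, (List.ofFn y).prod⁆ + N * (ε / (N + 1)) := by
        rw [hform x y hx hy, Finset.sum_add_distrib]; simp
      _ ≤ _ := by
        apply add_le_add
        · exact le_csSup hbK ⟨_, (hK _).2 ⟨x, hx, rfl⟩, _, (hK _).2 ⟨y, hy, rfl⟩, rfl⟩
        · have : (N + 1) * (ε / (N + 1)) = ε := by field_simp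
          linarith
end

section
/- Let G be a group, H ≤ G a subgroup, and suppose there exist elements g₁ = 1, g₂, …, g_N ∈ G such that the subgroups g_iHg_i⁻¹, i = 1,…,N, pairwise commute elementwise. Then every homogeneous quasi-morphism φ on G satisfies sup_{x,y ∈ G} φ([x,y]) ≥ N · sup_{x,y ∈ H} φ([x,y]). -/
open scoped commutatorElement

lemma qm_zero_of_bdd (t K : ℝ) (h : ∀ n : ℕ, (n : ℝ) * |t| ≤ K) : t = 0 := by
  by_contra ht
  have hpos : 0 < |t| := abs_pos.mpr ht
  obtain ⟨n, hn⟩ := exists_nat_gt (K / |t|)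
  have h1 := h n
  rw [div_lt_iff₀ hpos] at hn
  linarith

lemma qm_conj {G : Type*} [Group G] (φ : G → ℝ) (C : ℝ)
    (hC : ∀ a b : G, |φ (a * b) - φ a - φ b| ≤ C)
    (hhom : ∀ (a : G) (n : ℤ), φ (a ^ n) = n * φ a) (c a : G) :
    φ (c * a * c⁻¹) = φ a := by
  have hinv : φ c⁻¹ = - φ c := by simpa using hhom c (-1)
  refine sub_eq_zero.mp (qm_zero_of_bdd _ (2 * C) fun n => ?_)
  have e1 : φ (c * a ^ (n : ℤ) * c⁻¹) = n * φ (c * a * c⁻¹) := by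
    rw [← conj_zpow, hhom]; simp
  have e2 : φ (a ^ (n : ℤ)) = n * φ a := by rw [hhom]; simp
  have h1 := abs_le.mp (hC (c * a ^ (n : ℤ)) c⁻¹)
  have h2 := abs_le.mp (hC c (a ^ (n : ℤ)))
  rw [e1, hinv] at h1
  rw [e2] at h2
  rw [← Nat.abs_cast n, ← abs_mul, abs_le, mul_sub]
  constructor <;> linarith [h1.1, h1.2, h2.1, h2.2]

lemma qm_commute {G : Type*} [Group G] (φ : G → ℝ) (C : ℝ)
    (hC : ∀ a b : G, |φ (a * b) - φ a - φ b| ≤ C)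
    (hhom : ∀ (a : G) (n : ℤ), φ (a ^ n) = n * φ a) (a b : G) (h : Commute a b) :
    φ (a * b) = φ a + φ b := by
  refine sub_eq_zero.mp (qm_zero_of_bdd _ C fun n => ?_)
  have h1 := hC (a ^ (n : ℤ)) (b ^ (n : ℤ))
  rw [← h.mul_zpow, hhom, hhom, hhom] at h1
  rw [← Nat.abs_cast n, ← abs_mul]
  have e : (n : ℝ) * (φ (a * b) - (φ a + φ b)) =
      ((n : ℤ) : ℝ) * φ (a * b) - ((n : ℤ) : ℝ) * φ a - ((n : ℤ) : ℝ) * φ b := by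
    push_cast
    ring
  rw [e]
  exact h1

lemma commutator_mul_mul {G : Type*} [Group G] (X Y a b : G)
    (h1 : Commute X a) (h2 : Commute X b) (h3 : Commute Y a) (h4 : Commute Y b) :
    ⁅X * a, Y * b⁆ = ⁅X, Y⁆ * ⁅a, b⁆ := by
  simp only [commutatorElement_def, mul_inv_rev]
  have e1 : X * a * (Y * b) = (X * Y) * (a * b) := by
    rw [mul_assoc, ← mul_assoc a, ← h3.eq]; simp only [mul_assoc]
  have e2 : a⁻¹ * X⁻¹ * (b⁻¹ * Y⁻¹) = (X⁻¹ * Y⁻¹) * (a⁻¹ * b⁻¹) := by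
    have k1 : a⁻¹ * X⁻¹ = X⁻¹ * a⁻¹ := (h1.inv_inv).eq.symm
    have k2 : b⁻¹ * Y⁻¹ = Y⁻¹ * b⁻¹ := (h4.inv_inv).eq.symm
    have k3 : a⁻¹ * Y⁻¹ = Y⁻¹ * a⁻¹ := (h3.inv_inv).eq.symm
    rw [k1, k2, mul_assoc, ← mul_assoc a⁻¹, k3]; simp only [mul_assoc]
  have e3 : Commute (a * b) (X⁻¹ * Y⁻¹) :=
    ((h1.symm.inv_right).mul_right h3.symm.inv_right).mul_left
      ((h2.symm.inv_right).mul_right h4.symm.inv_right)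
  calc X * a * (Y * b) * (a⁻¹ * X⁻¹) * (b⁻¹ * Y⁻¹)
      = (X * a * (Y * b)) * (a⁻¹ * X⁻¹ * (b⁻¹ * Y⁻¹)) := by simp only [mul_assoc]
    _ = X * Y * ((a * b) * (X⁻¹ * Y⁻¹)) * (a⁻¹ * b⁻¹) := by
        rw [e1, e2]; simp only [mul_assoc]
    _ = _ := by rw [e3.eq]; simp only [mul_assoc]

/-- If `g₁ = 1, g₂, …, g_N ∈ G` are such that the conjugates `gᵢHgᵢ⁻¹`
pairwise commute elementwise, then every homogeneous quasi-morphism `φ` on `G`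
satisfies `sup_{x,y ∈ G} φ([x,y]) ≥ N · sup_{x,y ∈ H} φ([x,y])`. -/
theorem sup_commutator_quasimorphism_ge_of_packing {G : Type*} [Group G]
    (H : Subgroup G) (N : ℕ) (hN : 0 < N)
    (g : Fin N → G) (hg1 : g ⟨0, hN⟩ = 1)
    (hcomm : ∀ i j : Fin N, i ≠ j →
      ∀ a ∈ H, ∀ b ∈ H, Commute (g i * a * (g i)⁻¹) (g j * b * (g j)⁻¹))
    (φ : G → ℝ)
    (hqm : ∃ C : ℝ, ∀ a b : G, |φ (a * b) - φ a - φ b| ≤ C)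
    (hhom : ∀ (a : G) (n : ℤ), φ (a ^ n) = n * φ a) :
    (N : ℝ) * sSup {r : ℝ | ∃ x ∈ H, ∃ y ∈ H, r = φ ⁅x, y⁆} ≤
      sSup {r : ℝ | ∃ x y : G, r = φ ⁅x, y⁆} := by
  obtain ⟨C, hC⟩ := hqm
  have hbdd : BddAbove {r : ℝ | ∃ x y : G, r = φ ⁅x, y⁆} := by
    refine ⟨C, ?_⟩
    rintro r ⟨x, y, rfl⟩
    have h1 := abs_le.mp (hC (x * y * x⁻¹) y⁻¹)
    have hinv : φ y⁻¹ = - φ y := by simpa using hhom y (-1)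
    rw [qm_conj φ C hC hhom, hinv] at h1
    rw [commutatorElement_def]
    linarith [h1.2]
  have key : ∀ x ∈ H, ∀ y ∈ H, ∃ X Y : G, φ ⁅X, Y⁆ = N * φ ⁅x, y⁆ := by
    intro x hx y hy
    have ind : ∀ s : Finset (Fin N), ∃ X Y : G, φ ⁅X, Y⁆ = s.card * φ ⁅x, y⁆ ∧
        ∀ j, j ∉ s → ∀ a ∈ H, Commute X (g j * a * (g j)⁻¹) ∧
          Commute Y (g j * a * (g j)⁻¹) := by
      intro s
      induction s using Finset.induction_on with
      | empty =>
        refine ⟨1, 1, ?_, fun j _ a _ => ⟨Commute.one_left _, Commute.one_left _⟩⟩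
        simpa using hhom 1 0
      | insert i s hi ih =>
        obtain ⟨X, Y, hXY, hc⟩ := ih
        refine ⟨X * (g i * x * (g i)⁻¹), Y * (g i * y * (g i)⁻¹), ?_, ?_⟩
        · have c1 := hc i hi x hx
          have c2 := hc i hi y hy
          have e : ⁅g i * x * (g i)⁻¹, g i * y * (g i)⁻¹⁆ = g i * ⁅x, y⁆ * (g i)⁻¹ :=
            (conjugate_commutatorElement x y (g i)).symm
          have hm : ⁅x, y⁆ ∈ H := by
            rw [commutatorElement_def]
            exact H.mul_mem (H.mul_mem (H.mul_mem hx hy) (H.inv_mem hx)) (H.inv_mem hy)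
          have c3 := hc i hi _ hm
          have c4 : Commute ⁅X, Y⁆ (g i * ⁅x, y⁆ * (g i)⁻¹) := by
            rw [commutatorElement_def X Y]
            exact ((c3.1.mul_left c3.2).mul_left c3.1.inv_left).mul_left c3.2.inv_left
          rw [commutator_mul_mul _ _ _ _ c1.1 c2.1 c1.2 c2.2, e,
            qm_commute φ C hC hhom _ _ c4, qm_conj φ C hC hhom, hXY,
            Finset.card_insert_of_notMem hi]
          push_cast
          ring
        · intro j hj a ha
          rw [Finset.mem_insert, not_or] at hj
          have c := hc j hj.2 a ha
          exact ⟨c.1.mul_left (hcomm i j (Ne.symm hj.1) x hx a ha),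
            c.2.mul_left (hcomm i j (Ne.symm hj.1) y hy a ha)⟩
    obtain ⟨X, Y, h, -⟩ := ind Finset.univ
    exact ⟨X, Y, by simpa using h⟩
  have hNpos : (0 : ℝ) < N := by exact_mod_cast hN
  rw [mul_comm, ← le_div_iff₀ hNpos]
  refine csSup_le ⟨_, 1, H.one_mem, 1, H.one_mem, rfl⟩ ?_
  rintro r ⟨x, hx, y, hy, rfl⟩
  obtain ⟨X, Y, h⟩ := key x hx y hy
  rw [le_div_iff₀ hNpos, mul_comm, ← h]
  exact le_csSup hbdd ⟨X, Y, rfl⟩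
end

section
/- Let G be a group and H ≤ G a subgroup that is m-displaceable in G, i.e., there exist φ₀ = 1, φ₁, …, φ_m ∈ G such that the subgroups φ_iHφ_i⁻¹, i = 0,…,m, pairwise commute elementwise. Then for every element w of the commutator subgroup [H,H], the stable commutator lengths satisfy scl_G(w) ≤ scl_H(w)/(m+1). -/
open scoped commutatorElement

/-- The commutator length of `x` with respect to the subgroup `H`: the least
`n` such that `x` is a product of `n` commutators of elements of `H`. -/
noncomputable def clIn {G : Type*} [Group G] (H : Subgroup G) (x : G) : ℕ :=
  sInf {n : ℕ | ∃ f g : Fin n → G, (∀ i, f i ∈ H ∧ g i ∈ H) ∧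
    x = (List.ofFn fun i => ⁅f i, g i⁆).prod}

/-- `x` is a product of `n` commutators of elements of `H`. -/
def IsProdComm {G : Type*} [Group G] (H : Subgroup G) (n : ℕ) (x : G) : Prop :=
  ∃ l : List G, l.length = n ∧ (∀ c ∈ l, ∃ a ∈ H, ∃ b ∈ H, c = ⁅a, b⁆) ∧ l.prod = x

theorem isProdComm_iff {G : Type*} [Group G] (H : Subgroup G) (n : ℕ) (x : G) :
    IsProdComm H n x ↔ ∃ f g : Fin n → G, (∀ i, f i ∈ H ∧ g i ∈ H) ∧
    x = (List.ofFn fun i => ⁅f i, g i⁆).prod := by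
  constructor
  · rintro ⟨l, rfl, h, rfl⟩
    choose f hf g hg hfg using fun i : Fin l.length => h (l.get i) (List.get_mem l i)
    refine ⟨f, g, fun i => ⟨hf i, hg i⟩, ?_⟩
    rw [← funext hfg, List.ofFn_get]
  · rintro ⟨f, g, h, rfl⟩
    refine ⟨_, List.length_ofFn, ?_, rfl⟩
    intro c hc
    obtain ⟨i, rfl⟩ := (List.mem_ofFn' _ _).1 hc
    exact ⟨_, (h i).1, _, (h i).2, rfl⟩

theorem IsProdComm.mul {G : Type*} [Group G] {H : Subgroup G} {n k : ℕ} {x y : G}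
    (hx : IsProdComm H n x) (hy : IsProdComm H k y) : IsProdComm H (n + k) (x * y) := by
  obtain ⟨l, rfl, h, rfl⟩ := hx
  obtain ⟨l', rfl, h', rfl⟩ := hy
  refine ⟨l ++ l', by simp, ?_, by simp⟩
  intro c hc
  rcases List.mem_append.1 hc with hc | hc
  · exact h c hc
  · exact h' c hc

theorem IsProdComm.one {G : Type*} [Group G] (H : Subgroup G) : IsProdComm H 0 1 :=
  ⟨[], rfl, by simp, rfl⟩

theorem IsProdComm.single {G : Type*} [Group G] {H : Subgroup G} {a b : G} (ha : a ∈ H)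
    (hb : b ∈ H) : IsProdComm H 1 ⁅a, b⁆ :=
  ⟨[⁅a, b⁆], rfl, by simpa using ⟨a, ha, b, hb, rfl⟩, by simp⟩

theorem IsProdComm.inv {G : Type*} [Group G] {H : Subgroup G} {n : ℕ} {x : G}
    (hx : IsProdComm H n x) : IsProdComm H n x⁻¹ := by
  obtain ⟨l, rfl, h, rfl⟩ := hx
  refine ⟨(l.map (·⁻¹)).reverse, by simp, ?_, by rw [List.prod_inv_reverse]⟩
  intro c hc
  simp only [List.mem_reverse, List.mem_map] at hc
  obtain ⟨d, hd, rfl⟩ := hc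
  obtain ⟨a, ha, b, hb, rfl⟩ := h d hd
  exact ⟨b, hb, a, ha, commutatorElement_inv a b⟩

theorem IsProdComm.map {G K : Type*} [Group G] [Group K] {H : Subgroup G} {n : ℕ} {x : H}
    (hx : IsProdComm H n (x : G)) (f : H →* K) : IsProdComm (⊤ : Subgroup K) n (f x) := by
  obtain ⟨l, hl, h, hx⟩ := hx
  induction l generalizing n x with
  | nil =>
    have : x = 1 := by
      ext; simpa using hx.symm
    subst this
    subst hl
    rw [map_one]; exact IsProdComm.one _
  | cons c l ih =>
    obtain ⟨a, ha, b, hb, rfl⟩ := h c (by simp)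
    have h2 := ih (n := l.length) (x := ⁅(⟨a, ha⟩ : H), ⟨b, hb⟩⁆⁻¹ * x) rfl
      (fun d hd => h d (by simp [hd])) (by
        rw [Subgroup.coe_mul, ← hx]
        simp [commutatorElement_def, mul_assoc])
    have h3 := (IsProdComm.single (H := (⊤ : Subgroup K)) (a := f ⟨a, ha⟩) (b := f ⟨b, hb⟩)
      trivial trivial).mul h2
    rw [← map_commutatorElement, ← map_mul, mul_inv_cancel_left] at h3
    rw [← hl, List.length_cons, add_comm]
    exact h3

theorem IsProdComm.conj {G : Type*} [Group G] {n : ℕ} {x : G}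
    (hx : IsProdComm (⊤ : Subgroup G) n x) (g : G) :
    IsProdComm (⊤ : Subgroup G) n (g * x * g⁻¹) :=
  IsProdComm.map (x := (⟨x, Subgroup.mem_top x⟩ : (⊤ : Subgroup G))) hx ((MulAut.conj g).toMonoidHom.comp (⊤ : Subgroup G).subtype)

theorem exists_isProdComm {G : Type*} [Group G] {H : Subgroup G} {w : G} (hw : w ∈ ⁅H, H⁆) :
    ∃ n, IsProdComm H n w := by
  rw [Subgroup.commutator_def] at hw
  induction hw using Subgroup.closure_induction with
  | mem x hx =>
    obtain ⟨a, ha, b, hb, rfl⟩ := hx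
    exact ⟨1, .single ha hb⟩
  | one => exact ⟨0, .one H⟩
  | mul x y _ _ hx hy =>
    obtain ⟨n, hn⟩ := hx
    obtain ⟨k, hk⟩ := hy
    exact ⟨_, hn.mul hk⟩
  | inv x _ hx =>
    obtain ⟨n, hn⟩ := hx
    exact ⟨n, hn.inv⟩

theorem isProdComm_clIn {G : Type*} [Group G] {H : Subgroup G} {w : G} (hw : w ∈ ⁅H, H⁆) :
    IsProdComm H (clIn H w) w := by
  obtain ⟨n, hn⟩ := exists_isProdComm hw
  rw [isProdComm_iff]
  exact Nat.sInf_mem (s := {n : ℕ | ∃ f g : Fin n → G, (∀ i, f i ∈ H ∧ g i ∈ H) ∧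
    w = (List.ofFn fun i => ⁅f i, g i⁆).prod}) ⟨n, (isProdComm_iff H n w).1 hn⟩

theorem clIn_le {G : Type*} [Group G] {H : Subgroup G} {n : ℕ} {w : G}
    (h : IsProdComm H n w) : clIn H w ≤ n :=
  Nat.sInf_le ((isProdComm_iff H n w).1 h)

theorem noncommProd_conj {G : Type*} [Group G] {ι : Type*} [DecidableEq ι] (φ : ι → G) (x : G)
    (s : Finset ι) : ∀ hc : (s : Set ι).Pairwise (Function.onFun Commute fun i => φ i * x * (φ i)⁻¹),
    ∃ q, IsProdComm (⊤ : Subgroup G) s.card q ∧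
      s.noncommProd (fun i => φ i * x * (φ i)⁻¹) hc = q * x ^ s.card := by
  induction s using Finset.induction_on with
  | empty => intro hc; exact ⟨1, .one _, by simp⟩
  | insert a s ha ih =>
    intro hc
    obtain ⟨q, hq, h⟩ := ih (hc.mono (by simp))
    refine ⟨⁅φ a, x⁆ * (x * q * x⁻¹), ?_, ?_⟩
    · rw [Finset.card_insert_of_notMem ha, add_comm]
      exact (IsProdComm.single (Subgroup.mem_top _) (Subgroup.mem_top _)).mul (hq.conj x)
    · rw [Finset.noncommProd_insert_of_notMem _ _ _ _ ha, h, Finset.card_insert_of_notMem ha,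
        pow_succ']
      simp [commutatorElement_def, mul_assoc]

theorem clIn_pow_le {G : Type*} [Group G]
    (H : Subgroup G) (m : ℕ) (φ : Fin (m + 1) → G)
    (hcomm : ∀ i j : Fin (m + 1), i ≠ j →
      ∀ a ∈ H, ∀ b ∈ H, Commute (φ i * a * (φ i)⁻¹) (φ j * b * (φ j)⁻¹))
    (x : G) (hx : x ∈ ⁅H, H⁆) :
    clIn (⊤ : Subgroup G) (x ^ (m + 1)) ≤ clIn H x + (m + 1) := by
  have hxH : x ∈ H := Subgroup.commutator_le_self H hx
  let F : (Fin (m + 1) → H) →* G := MonoidHom.noncommPiCoprod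
    (fun i => (MulAut.conj (φ i)).toMonoidHom.comp H.subtype)
    (fun i j hij a b => hcomm i j hij a a.2 b b.2)
  let D : H →* (Fin (m + 1) → H) := MonoidHom.pi fun _ => MonoidHom.id H
  have h1 := IsProdComm.map (x := ⟨x, hxH⟩) (isProdComm_clIn hx) (F.comp D)
  obtain ⟨q, hq, h⟩ := noncommProd_conj φ x Finset.univ
    (fun i _ j _ hij => hcomm i j hij x hxH x hxH)
  have h2 : (F.comp D) ⟨x, hxH⟩ = q * x ^ (m + 1) := by
    rw [Finset.card_univ, Fintype.card_fin] at h
    exact h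
  rw [h2] at h1
  rw [Finset.card_univ, Fintype.card_fin] at hq
  have h3 := hq.inv.mul h1
  rw [inv_mul_cancel_left] at h3
  exact (clIn_le h3).trans (add_comm _ _).le

/-- If `H` is `m`-displaceable in `G`, then for `w ∈ [H,H]` the stable
commutator lengths (the limits of `cl(wⁿ)/n`) satisfy
`scl_G(w) ≤ scl_H(w)/(m+1)`. -/
theorem scl_le_of_m_displaceable {G : Type*} [Group G]
    (H : Subgroup G) (m : ℕ) (hm : 1 ≤ m)
    (φ : Fin (m + 1) → G) (hφ0 : φ 0 = 1)
    (hcomm : ∀ i j : Fin (m + 1), i ≠ j →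
      ∀ a ∈ H, ∀ b ∈ H, Commute (φ i * a * (φ i)⁻¹) (φ j * b * (φ j)⁻¹))
    (w : G) (hw : w ∈ ⁅H, H⁆)
    (LH LG : ℝ)
    (hLH : Filter.Tendsto (fun n : ℕ => (clIn H (w ^ n) : ℝ) / n)
      Filter.atTop (nhds LH))
    (hLG : Filter.Tendsto (fun n : ℕ => (clIn (⊤ : Subgroup G) (w ^ n) : ℝ) / n)
      Filter.atTop (nhds LG)) :
    LG ≤ LH / (m + 1) := by
  have hle : ∀ n : ℕ, (clIn (⊤ : Subgroup G) (w ^ (n * (m + 1))) : ℝ) / ((n * (m + 1) : ℕ) : ℝ) ≤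
      ((clIn H (w ^ n) : ℝ) / n) / (m + 1) + 1 / (n : ℝ) := by
    intro n
    have h := clIn_pow_le H m φ hcomm (w ^ n) (Subgroup.pow_mem _ hw n)
    rw [← pow_mul] at h
    have h' : (clIn (⊤ : Subgroup G) (w ^ (n * (m + 1))) : ℝ) ≤ clIn H (w ^ n) + (m + 1) := by
      exact_mod_cast h
    rcases Nat.eq_zero_or_pos n with rfl | hn
    · simp
    have hn' : (0 : ℝ) < n := by exact_mod_cast hn
    calc _ ≤ ((clIn H (w ^ n) : ℝ) + (m + 1)) / ((n * (m + 1) : ℕ) : ℝ) := by gcongr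
      _ = _ := by
        push_cast
        field_simp
  have ht : Filter.Tendsto (fun n : ℕ => n * (m + 1)) Filter.atTop Filter.atTop :=
    Filter.tendsto_id.atTop_mul_const' (by omega)
  have hR := (hLH.div_const ((m : ℝ) + 1)).add tendsto_one_div_atTop_nhds_zero_nat
  rw [add_zero] at hR
  exact le_of_tendsto_of_tendsto' (hLG.comp ht) hR hle
end

section
/- Let G be a group, H ≤ G a subgroup, and F ∈ G an element that m-displaces H for every m ≥ 1, i.e., the subgroups FⁱHF⁻ⁱ, i = 0,1,2,…, pairwise commute elementwise. Then every element h of the commutator subgroup [H,H] satisfies cl_G(h) ≤ 2, i.e., h is a product of at most two commutators of elements of G. -/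
open scoped commutatorElement

/-- The induction step, as an identity in a group. -/
lemma step_identity {G : Type*} [Group G] (F a b h A B X : G)
    (hh : h = ⁅A, B⁆ * ⁅X, F⁆)
    (hA : Commute (F * A * F⁻¹) b) (hB : Commute a (F * B * F⁻¹))
    (hAa : Commute (F * A * F⁻¹) a) (hBb : Commute (F * B * F⁻¹) b)
    (hF : Commute (F * h * F⁻¹) h)
    (hX : Commute (F * (F * X * F⁻¹) * F⁻¹) h)
    (hX' : Commute (F * X * F⁻¹) h) :
    ⁅a, b⁆ * h = ⁅a * (F * A * F⁻¹), b * (F * B * F⁻¹)⁆ * ⁅(F * X * F⁻¹) * h, F⁆ := by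
  have e1 : F * h * F⁻¹ = ⁅F * A * F⁻¹, F * B * F⁻¹⁆ * ⁅F * X * F⁻¹, F⁆ := by
    rw [hh]; simp only [commutatorElement_def]; group
  have hX2 : Commute (F * (F * X * F⁻¹) * F⁻¹) (F * h * F⁻¹) := by
    have := congrArg (fun z => F * z * F⁻¹) hX'.eq
    show _ = _
    simpa [mul_assoc] using this
  have e3 : ⁅(F * X * F⁻¹) * h, F⁆ = ⁅F * X * F⁻¹, F⁆ * ((F * h * F⁻¹)⁻¹ * h) := by
    have c : Commute (F * (F * X * F⁻¹) * F⁻¹)⁻¹ ((F * h * F⁻¹)⁻¹ * h) :=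
      (hX2.inv_right.mul_right hX).inv_left
    have c2 : (F * h * F⁻¹)⁻¹ * h = h * (F * h * F⁻¹)⁻¹ := hF.inv_left.eq
    calc ⁅(F * X * F⁻¹) * h, F⁆
        = (F * X * F⁻¹) * ((h * (F * h * F⁻¹)⁻¹) * (F * (F * X * F⁻¹) * F⁻¹)⁻¹) := by
          simp only [commutatorElement_def]; group
      _ = (F * X * F⁻¹) * ((F * (F * X * F⁻¹) * F⁻¹)⁻¹ * ((F * h * F⁻¹)⁻¹ * h)) := by
          rw [← c2, c.eq]
      _ = _ := by simp only [commutatorElement_def]; group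
  have e2 : ⁅a * (F * A * F⁻¹), b * (F * B * F⁻¹)⁆ =
      ⁅a, b⁆ * ⁅F * A * F⁻¹, F * B * F⁻¹⁆ := by
    generalize F * A * F⁻¹ = P at *
    generalize F * B * F⁻¹ = Q at *
    simp only [commutatorElement_def]
    have c1 : Commute (P * Q * P⁻¹) a⁻¹ :=
      ((hAa.mul_left hB.symm).mul_left hAa.inv_left).inv_right
    have c2 : Commute (P * Q * P⁻¹ * Q⁻¹) b⁻¹ :=
      (((hA.mul_left hBb).mul_left hA.inv_left).mul_left hBb.inv_left).inv_right
    calc a * P * (b * Q) * (a * P)⁻¹ * (b * Q)⁻¹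
        = a * (P * b) * Q * P⁻¹ * a⁻¹ * Q⁻¹ * b⁻¹ := by group
      _ = a * b * ((P * Q * P⁻¹) * a⁻¹) * Q⁻¹ * b⁻¹ := by rw [hA.eq]; group
      _ = a * b * a⁻¹ * ((P * Q * P⁻¹ * Q⁻¹) * b⁻¹) := by rw [c1.eq]; group
      _ = _ := by rw [c2.eq]; group
  rw [e2, e3]
  calc ⁅a, b⁆ * h = ⁅a, b⁆ * (F * h * F⁻¹) * ((F * h * F⁻¹)⁻¹ * h) := by group
    _ = _ := by rw [e1]; group

/-- If `F` `m`-displaces the subgroup `H` for every `m ≥ 1` (i.e. all the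
conjugates `FⁱHF⁻ⁱ`, `i = 0,1,2,…`, pairwise commute elementwise), then every
element of the commutator subgroup `[H,H]` is a product of at most two
commutators of elements of `G`. -/
theorem cl_le_two_of_infinitely_displaceable {G : Type*} [Group G]
    (H : Subgroup G) (F : G)
    (hd : ∀ i j : ℕ, i ≠ j →
      ∀ a ∈ H, ∀ b ∈ H, Commute (F ^ i * a * (F ^ i)⁻¹) (F ^ j * b * (F ^ j)⁻¹))
    (h : G) (hh : h ∈ ⁅H, H⁆) :
    ∃ a b c d : G, h = ⁅a, b⁆ * ⁅c, d⁆ := by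
  have key : ∀ S : Set G, S = {g | ∃ i : ℕ, ∃ a ∈ H, F ^ i * a * (F ^ i)⁻¹ = g} →
      h ∈ H ∧ ∃ A ∈ Subgroup.closure S, ∃ B ∈ Subgroup.closure S,
        ∃ X ∈ Subgroup.closure S, h = ⁅A, B⁆ * ⁅X, F⁆ := by
    intro S hS
    have hHS : ∀ a ∈ H, a ∈ Subgroup.closure S := fun a ha =>
      Subgroup.subset_closure (by rw [hS]; exact ⟨0, a, ha, by simp⟩)
    have hK : ∀ x ∈ Subgroup.closure S, F * x * F⁻¹ ∈ Subgroup.closure S ∧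
        ∀ a ∈ H, Commute (F * x * F⁻¹) a := by
      intro x hx
      induction hx using Subgroup.closure_induction with
      | mem x hx =>
        rw [hS] at hx
        obtain ⟨i, a, ha, rfl⟩ := hx
        have e : F * (F ^ i * a * (F ^ i)⁻¹) * F⁻¹ = F ^ (i+1) * a * (F ^ (i+1))⁻¹ := by
          rw [pow_succ']; group
        rw [e]
        refine ⟨Subgroup.subset_closure (by rw [hS]; exact ⟨i+1, a, ha, rfl⟩), ?_⟩
        intro b hb
        simpa using hd (i+1) 0 (by omega) a ha b hb
      | one => simp [Subgroup.one_mem]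
      | mul x y _ _ hx hy =>
        have e : F * (x * y) * F⁻¹ = (F * x * F⁻¹) * (F * y * F⁻¹) := by group
        rw [e]
        exact ⟨mul_mem hx.1 hy.1, fun a ha => (hx.2 a ha).mul_left (hy.2 a ha)⟩
      | inv x _ hx =>
        have e : F * x⁻¹ * F⁻¹ = (F * x * F⁻¹)⁻¹ := by group
        rw [e]
        exact ⟨inv_mem hx.1, fun a ha => (hx.2 a ha).inv_left⟩
    have step : ∀ a ∈ H, ∀ b ∈ H, ∀ y : G, (y ∈ H ∧ ∃ A ∈ Subgroup.closure S,
        ∃ B ∈ Subgroup.closure S, ∃ X ∈ Subgroup.closure S, y = ⁅A, B⁆ * ⁅X, F⁆) →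
        (⁅a, b⁆ * y ∈ H ∧ ∃ A ∈ Subgroup.closure S,
        ∃ B ∈ Subgroup.closure S, ∃ X ∈ Subgroup.closure S, ⁅a, b⁆ * y = ⁅A, B⁆ * ⁅X, F⁆) := by
      rintro a ha b hb y ⟨hy, A, hA, B, hB, X, hX, e⟩
      refine ⟨mul_mem (mul_mem (mul_mem (mul_mem ha hb) (inv_mem ha)) (inv_mem hb)) hy,
        _, mul_mem (hHS a ha) (hK A hA).1, _, mul_mem (hHS b hb) (hK B hB).1,
        _, mul_mem (hK X hX).1 (hHS y hy), ?_⟩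
      exact step_identity F a b y A B X e ((hK A hA).2 b hb) ((hK B hB).2 a ha).symm
        ((hK A hA).2 a ha) ((hK B hB).2 b hb) ((hK y (hHS y hy)).2 y hy)
        ((hK _ (hK X hX).1).2 y hy) ((hK X hX).2 y hy)
    rw [Subgroup.commutator_def] at hh
    induction hh using Subgroup.closure_induction_left with
    | one => exact ⟨one_mem _, 1, one_mem _, 1, one_mem _, 1, one_mem _, by simp⟩
    | mul_left x hx y _ ih =>
      obtain ⟨a, ha, b, hb, rfl⟩ := hx
      exact step a ha b hb y ih
    | inv_mul_cancel x hx y _ ih =>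
      obtain ⟨a, ha, b, hb, rfl⟩ := hx
      rw [commutatorElement_inv]
      exact step b hb a ha y ih
  obtain ⟨_, A, _, B, _, X, _, e⟩ := key _ rfl
  exact ⟨A, B, X, F, e⟩
end
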